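/- arXiv:1704.01000 — 2 statements merged into one kernel-verified Lean document; each statement's English description precedes it below -/
import Mathlib

section
/- For every integer r ≥ 3 and all γ > 0, η > 0 there exist β > 0 and m₀ such that the following holds. Let G be an r-partite graph with vertex classes V₁,…,V_r, each of size m or m+1 with m ≥ m₀, let v₁v₂ be an edge of G between V₁ and V₂, let 𝒦 be a family of copies of K_r in G each containing the edge v₁v₂, and write |𝒦| = δ·m^{r−2}. Let (p_{ij})_{i≠j∈[r]} be probabilities in (0,1] such that δ·m^{r−2}·∏_{{k,ℓ} ∈ ([r] choose 2), {k,ℓ} ≠ {1,2}} p_{kℓ} ≥ (m+1)^{r−3+γ}, and let G_{(p_{ij})} be the random subgraph of G in which each edge between V_i and V_j is retained independently with probability p_{ij}. Then the probability that the number of copies K ∈ 𝒦 with E(K)∖{v₁v₂} ⊆ E(G_{(p_{ij})}) does not lie in the interval [(1−η)·(∏_{{k,ℓ} ≠ {1,2}} p_{kℓ})·δ·m^{r−2}, (1+η)·(∏_{{k,ℓ} ≠ {1,2}} p_{kℓ})·δ·m^{r−2}] is at most exp(−m^β). -/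
namespace RainbowDecomp

variable {V : Type*} {W : Type*}

/-- The number of edges of a graph. -/
noncomputable def eCount (G : SimpleGraph V) : ℕ := G.edgeSet.ncard

/-- `χ` is a proper edge coloring of `G`: any two distinct edges of `G` sharing a vertex
receive distinct colors. -/
def ProperEdgeColoring (G : SimpleGraph V) (χ : Sym2 V → ℕ) : Prop :=
  ∀ ⦃e f : Sym2 V⦄, e ∈ G.edgeSet → f ∈ G.edgeSet → e ≠ f →
    (∃ v, v ∈ e ∧ v ∈ f) → χ e ≠ χ f

/-- `S` is the edge set of a (sub)copy of `H` in `G`. -/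
def IsCopyEdgeSet (H : SimpleGraph W) (G : SimpleGraph V) (S : Set (Sym2 V)) : Prop :=
  ∃ f : W → V, Function.Injective f ∧ (∀ ⦃a b⦄, H.Adj a b → G.Adj (f a) (f b)) ∧
    S = Sym2.map f '' H.edgeSet

/-- `G` contains a subgraph isomorphic to `H`. -/
def ContainsCopy (H : SimpleGraph W) (G : SimpleGraph V) : Prop :=
  ∃ f : W → V, Function.Injective f ∧ ∀ ⦃a b⦄, H.Adj a b → G.Adj (f a) (f b)

/-- `P` is a partition of the edge set of `G` into `t` (nonempty) parts. -/
def IsEdgePartition (G : SimpleGraph V) {t : ℕ} (P : Fin t → Set (Sym2 V)) : Prop :=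
  (∀ i, P i ⊆ G.edgeSet) ∧ ∀ e ∈ G.edgeSet, ∃! i, e ∈ P i

/-- `P` is an `H`-decomposition of `G`: every part is a single edge or the edge set of a
copy of `H`. -/
def IsHDecomp (G : SimpleGraph V) (H : SimpleGraph W) {t : ℕ}
    (P : Fin t → Set (Sym2 V)) : Prop :=
  IsEdgePartition G P ∧ ∀ i, (∃ e, P i = {e}) ∨ IsCopyEdgeSet H G (P i)

/-- `P` is a rainbow `H`-decomposition of `G` under `χ`: every part is a single edge or
the edge set of a rainbow copy of `H`. -/
def IsRainbowHDecomp (G : SimpleGraph V) (H : SimpleGraph W) (χ : Sym2 V → ℕ) {t : ℕ}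
    (P : Fin t → Set (Sym2 V)) : Prop :=
  IsEdgePartition G P ∧
    ∀ i, (∃ e, P i = {e}) ∨ (IsCopyEdgeSet H G (P i) ∧ Set.InjOn χ (P i))

/-- `φ(G,H)`, the minimum number of parts in an `H`-decomposition of `G`. -/
noncomputable def phi (G : SimpleGraph V) (H : SimpleGraph W) : ℕ :=
  sInf {t | ∃ P : Fin t → Set (Sym2 V), IsHDecomp G H P}

/-- `φ_χ^R(G,H)`, the minimum number of parts in a rainbow `H`-decomposition of `G`
under `χ`. -/
noncomputable def phiR (G : SimpleGraph V) (H : SimpleGraph W) (χ : Sym2 V → ℕ) : ℕ :=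
  sInf {t | ∃ P : Fin t → Set (Sym2 V), IsRainbowHDecomp G H χ P}

/-- `N(G,H)`, the maximum number of pairwise edge-disjoint copies of `H` in `G`. -/
noncomputable def Ncopies (G : SimpleGraph V) (H : SimpleGraph W) : ℕ :=
  sSup {k | ∃ C : Fin k → Set (Sym2 V), (∀ i, IsCopyEdgeSet H G (C i)) ∧
    ∀ i j, i ≠ j → Disjoint (C i) (C j)}

/-- `N_χ^R(G,H)`, the maximum number of pairwise edge-disjoint rainbow copies of `H`
in `G` under `χ`. -/
noncomputable def NcopiesR (G : SimpleGraph V) (H : SimpleGraph W) (χ : Sym2 V → ℕ) : ℕ :=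
  sSup {k | ∃ C : Fin k → Set (Sym2 V),
    (∀ i, IsCopyEdgeSet H G (C i) ∧ Set.InjOn χ (C i)) ∧
    ∀ i j, i ≠ j → Disjoint (C i) (C j)}

/-- `ex(n,H)`, the maximum number of edges of an `H`-free graph on `n` vertices. -/
noncomputable def exNum (n : ℕ) (H : SimpleGraph W) : ℕ :=
  sSup {m | ∃ G : SimpleGraph (Fin n), ¬ ContainsCopy H G ∧ eCount G = m}

/-- `φ^R(n,H)`, the maximum of `φ_χ^R(G,H)` over all graphs `G` on `n` vertices and all
proper edge colorings `χ` of `G`. -/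
noncomputable def phiRmax (n : ℕ) (H : SimpleGraph W) : ℕ :=
  sSup {t | ∃ G : SimpleGraph (Fin n), ∃ χ : Sym2 (Fin n) → ℕ,
    ProperEdgeColoring G χ ∧ phiR G H χ = t}

/-- `e(A)`, the number of edges of `G` with both endpoints in `A`. -/
noncomputable def eInside (G : SimpleGraph V) (A : Set V) : ℕ :=
  {e ∈ G.edgeSet | ∀ v ∈ e, v ∈ A}.ncard

/-- `e(A,B)`, the number of edges of `G` with one endpoint in `A` and one in `B`
(counted as ordered pairs). -/
noncomputable def eBetween (G : SimpleGraph V) (A B : Set V) : ℕ :=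
  {p : V × V | p.1 ∈ A ∧ p.2 ∈ B ∧ G.Adj p.1 p.2}.ncard

/-- The edge density `d(A,B)` between `A` and `B`. -/
noncomputable def density (G : SimpleGraph V) (A B : Set V) : ℝ :=
  (eBetween G A B : ℝ) / ((A.ncard : ℝ) * (B.ncard : ℝ))

/-- The pair `(A,B)` is `ε`-regular in `G`. -/
def IsRegularPair (G : SimpleGraph V) (ε : ℝ) (A B : Set V) : Prop :=
  ∀ A' ⊆ A, ∀ B' ⊆ B, ε * (A.ncard : ℝ) ≤ (A'.ncard : ℝ) →
    ε * (B.ncard : ℝ) ≤ (B'.ncard : ℝ) →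
    |density G A' B' - density G A B| ≤ ε

/-- The edges of the (transversal) clique with vertices `g 0, …, g (r-1)`. -/
def transversalEdges {r : ℕ} (g : Fin r → V) : Set (Sym2 V) :=
  {e | ∃ k l : Fin r, k ≠ l ∧ e = s(g k, g l)}

/-- The number of rainbow transversal copies of `K_r` (one vertex in each `Vs l`)
containing the edge `uv` with `u ∈ Vs i` and `v ∈ Vs j`. -/
noncomputable def rainbowCliqueCount {r : ℕ} (G : SimpleGraph V) (χ : Sym2 V → ℕ)
    (Vs : Fin r → Set V) (i j : Fin r) (u v : V) : ℕ :=
  {g : Fin r → V | (∀ l, g l ∈ Vs l) ∧ (∀ k l, k ≠ l → G.Adj (g k) (g l)) ∧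
    g i = u ∧ g j = v ∧ Set.InjOn χ (transversalEdges g)}.ncard

/-- The number of non-rainbow transversal copies of `K_r` (one vertex in each `Vs l`)
containing the edge `uv` with `u ∈ Vs i` and `v ∈ Vs j`. -/
noncomputable def nonRainbowCliqueCount {r : ℕ} (G : SimpleGraph V) (χ : Sym2 V → ℕ)
    (Vs : Fin r → Set V) (i j : Fin r) (u v : V) : ℕ :=
  {g : Fin r → V | (∀ l, g l ∈ Vs l) ∧ (∀ k l, k ≠ l → G.Adj (g k) (g l)) ∧
    g i = u ∧ g j = v ∧ ¬ Set.InjOn χ (transversalEdges g)}.ncard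

/-- The edge set of the clique on the vertex set `K`. -/
def cliqueEdges (K : Finset V) : Set (Sym2 V) :=
  {e | ∃ u ∈ K, ∃ v ∈ K, u ≠ v ∧ e = s(u, v)}

open scoped Classical in
/-- The probability of the event `A` under the random subgraph of `G` in which every
edge `e` is retained independently with probability `q e`. -/
noncomputable def edgeSubsetProb [Fintype V] (G : SimpleGraph V) (q : Sym2 V → ℝ)
    (A : Set (Finset (Sym2 V))) : ℝ :=
  ∑ E' ∈ (Set.toFinite G.edgeSet).toFinset.powerset,
    (∏ e ∈ E', q e) * (∏ e ∈ (Set.toFinite G.edgeSet).toFinset \ E', (1 - q e)) *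
      A.indicator (fun _ => (1 : ℝ)) E'

/-!
Two copies of `K_r` through the edge `v₁v₂` that share no third vertex are closed by disjoint edge
sets, so the corresponding events are independent. A fixed copy in `𝒦` shares a third vertex with at
most `(r - 2) |V| ^ (r - 3)` others; greedily colouring this dependency graph splits `𝒦` into
`D = O(m ^ (r - 3))` classes of mutually independent events. Within a class Chernoff's exponential
moment bound holds, and by Jensen's inequality averaging over the classes gives the same bound for
the whole count with the exponent divided by `D`. The hypothesis makes the expectation at least
`m ^ (r - 3 + γ)`, hence the resulting exponent is at least a constant times `m ^ γ`.
-/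

open Finset Filter

section RandomSubset

variable {α ι κ : Type*} {S : Finset α} {q : α → ℝ} {T : Finset ι} {A : ι → Finset α}

/-- The expected number of members of the family `(A i)_{i ∈ T}` contained in the random set that
retains each `e` independently with probability `q e`. -/
def expectedCount (q : α → ℝ) (T : Finset ι) (A : ι → Finset α) : ℝ := ∑ i ∈ T, ∏ e ∈ A i, q e

theorem expectedCount_attach (q : α → ℝ) (T : Finset ι) (A : ι → Finset α) :
    expectedCount q univ (fun i : T => A i) = expectedCount q T A :=
  sum_coe_sort T fun i => ∏ e ∈ A i, q e

theorem expectedCount_nonneg (hq : ∀ e ∈ S, 0 ≤ q e ∧ q e ≤ 1) (hA : ∀ i ∈ T, A i ⊆ S) :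
    0 ≤ expectedCount q T A :=
  sum_nonneg fun i hi => prod_nonneg fun e he => (hq e (hA i hi he)).1

variable [DecidableEq α]

/-- The probability that the random subset of `S`, in which every `e ∈ S` is retained
independently with probability `q e`, equals `E`. -/
noncomputable def bernoulliWeight (S : Finset α) (q : α → ℝ) (E : Finset α) : ℝ :=
  (∏ e ∈ E, q e) * ∏ e ∈ S \ E, (1 - q e)

/-- Expectation over the random subset of `S` in which every `e ∈ S` is retained independently
with probability `q e`, as a linear functional. The probability of an event is the expectation of
its indicator. -/
noncomputable def bernoulliExpect (S : Finset α) (q : α → ℝ) : (Finset α → ℝ) →ₗ[ℝ] ℝ :=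
  ∑ E ∈ S.powerset, bernoulliWeight S q E • LinearMap.proj E

theorem bernoulliExpect_apply (S : Finset α) (q : α → ℝ) (f : Finset α → ℝ) :
    bernoulliExpect S q f = ∑ E ∈ S.powerset, bernoulliWeight S q E * f E := by
  simp [bernoulliExpect]

theorem bernoulliWeight_nonneg (hq : ∀ e ∈ S, 0 ≤ q e ∧ q e ≤ 1) {E : Finset α} (hE : E ⊆ S) :
    0 ≤ bernoulliWeight S q E :=
  mul_nonneg (prod_nonneg fun e he => (hq e (hE he)).1)
    (prod_nonneg fun e he => sub_nonneg.2 (hq e (mem_sdiff.1 he).1).2)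

theorem bernoulliExpect_mono (hq : ∀ e ∈ S, 0 ≤ q e ∧ q e ≤ 1) :
    Monotone (bernoulliExpect S q) := by
  intro f g hfg
  simp only [bernoulliExpect_apply]
  exact sum_le_sum fun E hE =>
    mul_le_mul_of_nonneg_left (hfg E) (bernoulliWeight_nonneg hq (mem_powerset.1 hE))

theorem bernoulliExpect_subset {A : Finset α} (hA : A ⊆ S) (q : α → ℝ) :
    bernoulliExpect S q (fun E => if A ⊆ E then 1 else 0) = ∏ e ∈ A, q e := by
  -- Forbidding the elements of `A` to be dropped turns `∏ (q e + (1 - q e))` into `∏ e ∈ A, q e`.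
  have hdrop : ∀ E, (if A ⊆ E then ∏ e ∈ S \ E, (1 - q e) else (0 : ℝ)) =
      ∏ e ∈ S \ E, if e ∈ A then 0 else 1 - q e := by
    intro E
    split_ifs with hAE
    · exact prod_congr rfl fun e he => (if_neg fun heA => (mem_sdiff.1 he).2 (hAE heA)).symm
    · obtain ⟨e, heA, heE⟩ := not_subset.1 hAE
      refine (prod_eq_zero (mem_sdiff.2 ⟨hA heA, heE⟩) ?_).symm
      exact if_pos heA
  calc bernoulliExpect S q (fun E => if A ⊆ E then 1 else 0)
      = ∑ E ∈ S.powerset, (∏ e ∈ E, q e) * ∏ e ∈ S \ E, if e ∈ A then 0 else 1 - q e := by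
        simp only [bernoulliExpect_apply, bernoulliWeight, mul_ite, mul_one, mul_zero,
          ← hdrop]
    _ = ∏ e ∈ S, (q e + if e ∈ A then 0 else 1 - q e) := (prod_add _ _ _).symm
    _ = ∏ e ∈ S, if e ∈ A then q e else 1 := prod_congr rfl fun e _ => by split_ifs <;> ring
    _ = ∏ e ∈ A, q e := by rw [prod_ite_mem, inter_eq_right.2 hA]

theorem bernoulliExpect_prod_one_add (q : α → ℝ) (hA : ∀ i ∈ T, A i ⊆ S)
    (hdisj : (T : Set ι).PairwiseDisjoint A) (t : ι → ℝ) :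
    bernoulliExpect S q (fun E => ∏ i ∈ T, (1 + t i * if A i ⊆ E then 1 else 0)) =
      ∏ i ∈ T, (1 + t i * ∏ e ∈ A i, q e) := by
  have hexpand : (fun E => ∏ i ∈ T, (1 + t i * if A i ⊆ E then 1 else 0)) =
      ∑ U ∈ T.powerset, (∏ i ∈ U, t i) • fun E => if U.biUnion A ⊆ E then (1 : ℝ) else 0 := by
    funext E
    simp only [prod_one_add, Finset.sum_apply, Pi.smul_apply, smul_eq_mul, prod_mul_distrib,
      prod_ite_zero, prod_const_one, biUnion_subset]
  rw [hexpand, map_sum, prod_one_add]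
  refine sum_congr rfl fun U hU => ?_
  have hUT : U ⊆ T := mem_powerset.1 hU
  rw [map_smul, bernoulliExpect_subset (biUnion_subset.2 fun i hi => hA i (hUT hi)),
    prod_biUnion (hdisj.subset (coe_subset.2 hUT)), smul_eq_mul, prod_mul_distrib]

/-- The number of members of the family `(A i)_{i ∈ T}` contained in `E`. -/
def containedCount (T : Finset ι) (A : ι → Finset α) (E : Finset α) : ℕ := #{i ∈ T | A i ⊆ E}

theorem containedCount_attach (T : Finset ι) (A : ι → Finset α) (E : Finset α) :
    containedCount univ (fun i : T => A i) E = containedCount T A E := by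
  simp only [containedCount, card_filter]
  exact sum_coe_sort T fun i => if A i ⊆ E then 1 else 0

/-- The exponent `s X - (exp s - 1) μ` in Chernoff's bound, where `X` is the number of members of
the family `(A i)_{i ∈ T}` contained in `E` and `μ` its expectation. The normalization is the one
for which the exponential has mean `1` if `X` is Poisson. -/
noncomputable def chernoffExponent (q : α → ℝ) (T : Finset ι) (A : ι → Finset α) (s : ℝ)
    (E : Finset α) : ℝ :=
  s * containedCount T A E - (Real.exp s - 1) * expectedCount q T A

theorem chernoffExponent_eq_sum (q : α → ℝ) (T : Finset ι) (A : ι → Finset α) (s : ℝ)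
    (E : Finset α) : chernoffExponent q T A s E =
      ∑ i ∈ T, (s * (if A i ⊆ E then 1 else 0) - (Real.exp s - 1) * ∏ e ∈ A i, q e) := by
  rw [sum_sub_distrib, ← mul_sum, ← mul_sum, sum_boole]
  rfl

theorem bernoulliExpect_exp_chernoffExponent_le_one (hq : ∀ e ∈ S, 0 ≤ q e ∧ q e ≤ 1)
    (hA : ∀ i ∈ T, A i ⊆ S) (hdisj : (T : Set ι).PairwiseDisjoint A) (s : ℝ) :
    bernoulliExpect S q (fun E => Real.exp (chernoffExponent q T A s E)) ≤ 1 := by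
  set P : ι → ℝ := fun i => ∏ e ∈ A i, q e with hP
  set t : ℝ := Real.exp s - 1 with ht
  have hP0 : ∀ i ∈ T, 0 ≤ P i := fun i hi => prod_nonneg fun e he => (hq e (hA i hi he)).1
  have hP1 : ∀ i ∈ T, P i ≤ 1 := fun i hi =>
    prod_le_one (fun e he => (hq e (hA i hi he)).1) fun e he => (hq e (hA i hi he)).2
  have hfactor : (fun E => Real.exp (chernoffExponent q T A s E)) =
      (∏ i ∈ T, Real.exp (-(t * P i))) •
        fun E => ∏ i ∈ T, (1 + t * if A i ⊆ E then 1 else 0) := by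
    funext E
    rw [chernoffExponent_eq_sum, Real.exp_sum, Pi.smul_apply, smul_eq_mul, ← prod_mul_distrib]
    refine prod_congr rfl fun i _ => ?_
    split_ifs <;> simp [ht, hP, Real.exp_sub, Real.exp_neg, div_eq_inv_mul]
  rw [hfactor, map_smul, bernoulliExpect_prod_one_add q hA hdisj, smul_eq_mul, ← prod_mul_distrib]
  refine prod_le_one (fun i hi => mul_nonneg (Real.exp_pos _).le ?_) fun i _ => ?_
  · nlinarith [hP0 i hi, hP1 i hi, mul_nonneg (Real.exp_pos s).le (hP0 i hi)]
  · calc Real.exp (-(t * P i)) * (1 + t * P i) ≤ Real.exp (-(t * P i)) * Real.exp (t * P i) := by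
          gcongr
          linarith [Real.add_one_le_exp (t * P i)]
      _ = 1 := by rw [← Real.exp_add, neg_add_cancel, Real.exp_zero]

/-- The intersection graph of the family `A`: distinct indices are adjacent when their sets meet.
It is a dependency graph for the events that the random set contains `A i`. -/
def intersectionGraph (A : ι → Finset α) : SimpleGraph ι where
  Adj i j := i ≠ j ∧ ¬ Disjoint (A i) (A j)
  symm := ⟨fun _ _ h => ⟨h.1.symm, fun hd => h.2 hd.symm⟩⟩
  loopless := ⟨fun _ h => h.1 rfl⟩

theorem bernoulliExpect_exp_chernoffExponent_div_card_le_one [Fintype ι] [Fintype κ] [Nonempty κ]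
    (hq : ∀ e ∈ S, 0 ≤ q e ∧ q e ≤ 1) (hA : ∀ i, A i ⊆ S) (C : (intersectionGraph A).Coloring κ)
    (s : ℝ) :
    bernoulliExpect S q (fun E => Real.exp (chernoffExponent q univ A s E / Fintype.card κ)) ≤
      1 := by
  classical
  set w : ℝ := (Fintype.card κ : ℝ)⁻¹ with hw
  have hw0 : 0 ≤ w := by positivity
  have hw1 : ∑ _k : κ, w = 1 := by simp [hw]
  have hclass : ∀ k, bernoulliExpect S q
      (fun E => Real.exp (chernoffExponent q {i | C i = k} A s E)) ≤ 1 := fun k => by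
    refine bernoulliExpect_exp_chernoffExponent_le_one hq (fun i _ => hA i) ?_ s
    intro i hi j hj hij
    by_contra hmeet
    exact C.valid ⟨hij, hmeet⟩ ((mem_filter.1 hi).2.trans (mem_filter.1 hj).2.symm)
  have hjensen : (fun E => Real.exp (chernoffExponent q univ A s E / Fintype.card κ)) ≤
      ∑ k, w • fun E => Real.exp (chernoffExponent q {i | C i = k} A s E) := fun E => by
    have hsplit : chernoffExponent q univ A s E =
        ∑ k, chernoffExponent q {i | C i = k} A s E := by
      simp only [chernoffExponent_eq_sum]
      exact (sum_fiberwise univ (fun i => C i) _).symm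
    simp only [hsplit, div_eq_inv_mul, mul_sum, Finset.sum_apply]
    exact convexOn_exp.map_sum_le (fun _ _ => hw0) hw1 fun _ _ => Set.mem_univ _
  calc _ ≤ _ := bernoulliExpect_mono hq hjensen
    _ = ∑ k, w * bernoulliExpect S q
          (fun E => Real.exp (chernoffExponent q {i | C i = k} A s E)) := by
        simp only [map_sum, map_smul, smul_eq_mul]
    _ ≤ ∑ _k : κ, w := sum_le_sum fun k _ => mul_le_of_le_one_right hw0 (hclass k)
    _ = 1 := hw1

/-- For `s > 0` this is an upper tail, for `s < 0` a lower tail. -/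
theorem bernoulliExpect_indicator_le_exp [Fintype ι] [Fintype κ] [Nonempty κ]
    (hq : ∀ e ∈ S, 0 ≤ q e ∧ q e ≤ 1) (hA : ∀ i, A i ⊆ S) (C : (intersectionGraph A).Coloring κ)
    {s : ℝ} (hs : |s| ≤ 1) :
    bernoulliExpect S q ({E | 2 * s ^ 2 * expectedCount q univ A ≤
      s * (containedCount univ A E - expectedCount q univ A)}.indicator fun _ => 1) ≤
      Real.exp (-(s ^ 2 * expectedCount q univ A / Fintype.card κ)) := by
  set μ : ℝ := expectedCount q univ A
  set b : ℝ := s ^ 2 * μ / Fintype.card κ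
  have hμ : 0 ≤ μ := expectedCount_nonneg hq fun i _ => hA i
  have hexp : Real.exp s - 1 ≤ s + s ^ 2 := by
    linarith [le_of_abs_le (Real.abs_exp_sub_one_sub_id_le hs)]
  have hmarkov : ({E | 2 * s ^ 2 * μ ≤ s * (containedCount univ A E - μ)}.indicator fun _ => 1) ≤
      Real.exp (-b) • fun E => Real.exp (chernoffExponent q univ A s E / Fintype.card κ) := by
    refine Set.indicator_le' (fun E hE => ?_) fun E _ =>
      mul_nonneg (Real.exp_pos _).le (Real.exp_pos _).le
    rw [Set.mem_ofPred_eq] at hE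
    have hle : s ^ 2 * μ ≤ chernoffExponent q univ A s E := by
      have := mul_le_mul_of_nonneg_right hexp hμ
      rw [chernoffExponent]
      linarith
    rw [Pi.smul_apply, smul_eq_mul, ← Real.exp_add, Real.one_le_exp_iff, neg_add_eq_sub, sub_nonneg]
    exact div_le_div_of_nonneg_right hle (Nat.cast_nonneg _)
  calc _ ≤ _ := bernoulliExpect_mono hq hmarkov
    _ = Real.exp (-b) * bernoulliExpect S q
          (fun E => Real.exp (chernoffExponent q univ A s E / Fintype.card κ)) := map_smul _ _ _
    _ ≤ Real.exp (-b) := mul_le_of_le_one_right (Real.exp_pos _).le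
        (bernoulliExpect_exp_chernoffExponent_div_card_le_one hq hA C s)

theorem bernoulliExpect_indicator_abs_le_two_mul_exp [Fintype ι] [Fintype κ] [Nonempty κ]
    (hq : ∀ e ∈ S, 0 ≤ q e ∧ q e ≤ 1) (hA : ∀ i, A i ⊆ S) (C : (intersectionGraph A).Coloring κ)
    {η : ℝ} (hη0 : 0 ≤ η) (hη2 : η ≤ 2) :
    bernoulliExpect S q ({E | η * expectedCount q univ A ≤
      |containedCount univ A E - expectedCount q univ A|}.indicator fun _ => 1) ≤
      2 * Real.exp (-(η ^ 2 / 4 * expectedCount q univ A / Fintype.card κ)) := by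
  set μ : ℝ := expectedCount q univ A
  set tail : ℝ → Set (Finset α) :=
    fun s => {E | 2 * s ^ 2 * μ ≤ s * (containedCount univ A E - μ)} with htail
  have hsplit : {E | η * μ ≤ |containedCount univ A E - μ|} ⊆ tail (η / 2) ∪ tail (-(η / 2)) := by
    intro E hE
    rcases le_abs.1 (Set.mem_ofPred_eq ▸ hE) with h | h
    · exact Or.inl (by simp only [htail, Set.mem_ofPred_eq]; nlinarith)
    · exact Or.inr (by simp only [htail, Set.mem_ofPred_eq]; nlinarith)
  have hunion : ({E | η * μ ≤ |containedCount univ A E - μ|}.indicator fun _ => (1 : ℝ)) ≤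
      (tail (η / 2)).indicator (fun _ => 1) + (tail (-(η / 2))).indicator fun _ => 1 := fun E => by
    refine (Set.indicator_le_indicator_of_subset hsplit (fun _ => zero_le_one) E).trans ?_
    rw [Pi.add_apply, ← Set.indicator_union_add_inter_apply]
    exact le_add_of_nonneg_right (Set.indicator_nonneg (fun _ _ => zero_le_one) E)
  have hη : |η / 2| ≤ 1 := abs_le.2 ⟨by linarith, by linarith⟩
  have hupper := bernoulliExpect_indicator_le_exp hq hA C hη
  have hlower := bernoulliExpect_indicator_le_exp hq hA C (s := -(η / 2)) (by rwa [abs_neg])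
  have hsq : (η / 2) ^ 2 = η ^ 2 / 4 := by ring
  rw [← hsq, two_mul]
  refine (bernoulliExpect_mono hq hunion).trans ?_
  rw [map_add]
  exact add_le_add hupper (hlower.trans_eq (by rw [neg_sq]))

end RandomSubset

theorem colorable_of_degree_le {ι : Type*} [Fintype ι] (H : SimpleGraph ι) [DecidableRel H.Adj]
    {Δ : ℕ} (hΔ : ∀ i, H.degree i ≤ Δ) : H.Colorable (Δ + 1) := by
  classical
  have hpartial : ∀ s : Finset ι, ∃ c : ι → Fin (Δ + 1),
      ∀ i ∈ s, ∀ j ∈ s, H.Adj i j → c i ≠ c j := by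
    intro s
    induction s using Finset.induction_on with
    | empty => exact ⟨0, by simp⟩
    | insert a s _ ih =>
      obtain ⟨c, hc⟩ := ih
      obtain ⟨k, hk⟩ : ∃ k, k ∉ (H.neighborFinset a).image c := by
        by_contra! hall
        have hcard : Δ + 1 ≤ #(H.neighborFinset a) := by
          simpa only [eq_univ_of_forall hall, card_univ, Fintype.card_fin] using
            card_image_le (s := H.neighborFinset a) (f := c)
        exact absurd hcard (not_le.2 (Nat.lt_succ_of_le (hΔ a)))
      have hfree : ∀ j, H.Adj a j → k ≠ c j := fun j haj hkj =>
        hk (mem_image.2 ⟨j, (H.mem_neighborFinset a j).2 haj, hkj.symm⟩)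
      refine ⟨Function.update c a k, fun i hi j hj hij => ?_⟩
      by_cases hia : i = a <;> by_cases hja : j = a
      · exact absurd (hia.trans hja.symm) hij.ne
      · simpa [hia, hja] using hfree j (hia ▸ hij)
      · simpa [hia, hja] using (hfree i (hja ▸ hij.symm)).symm
      · simpa [hia, hja] using
          hc i (mem_of_mem_insert_of_ne hi hia) j (mem_of_mem_insert_of_ne hj hja) hij
  obtain ⟨c, hc⟩ := hpartial univ
  exact ⟨SimpleGraph.Coloring.mk c fun {i j} hij => hc i (mem_univ i) j (mem_univ j) hij⟩

section Cliques

variable {𝒦 : Finset (Finset V)} {r : ℕ}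

theorem card_le_card_pow_of_forall_subset [Fintype V] {F : Finset V}
    (h𝒦 : ∀ K ∈ 𝒦, #K = r ∧ F ⊆ K) : #𝒦 ≤ Fintype.card V ^ (r - #F) := by
  classical
  have hmaps : Set.MapsTo (· \ F) 𝒦 (powersetCard (r - #F) (univ : Finset V)) := fun K hK =>
    mem_powersetCard.2 ⟨subset_univ _, by
      rw [card_sdiff_of_subset (h𝒦 K hK).2, (h𝒦 K hK).1]⟩
  have hinj : Set.InjOn (· \ F) (𝒦 : Set (Finset V)) := fun K hK L hL hKL => by
    rw [← sdiff_union_of_subset (h𝒦 K hK).2, ← sdiff_union_of_subset (h𝒦 L hL).2]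
    exact congrArg (· ∪ F) hKL
  calc #𝒦 ≤ #(powersetCard (r - #F) (univ : Finset V)) := card_le_card_of_injOn _ hmaps hinj
    _ ≤ Fintype.card V ^ (r - #F) := by
      rw [card_powersetCard, card_univ]
      exact Nat.choose_le_pow _ _

theorem edgeSubsetProb_eq_bernoulliExpect [Fintype V] [DecidableEq V] (G : SimpleGraph V)
    (q : Sym2 V → ℝ) (A : Set (Finset (Sym2 V))) :
    edgeSubsetProb G q A =
      bernoulliExpect (Set.toFinite G.edgeSet).toFinset q (A.indicator fun _ => 1) := by
  rw [bernoulliExpect_apply]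
  unfold edgeSubsetProb bernoulliWeight
  congr!

theorem edgeSubsetProb_mono [Fintype V] {G : SimpleGraph V} {q : Sym2 V → ℝ}
    (hq : ∀ e ∈ G.edgeSet, 0 ≤ q e ∧ q e ≤ 1) : Monotone (edgeSubsetProb G q) := by
  classical
  intro A B hAB
  rw [edgeSubsetProb_eq_bernoulliExpect, edgeSubsetProb_eq_bernoulliExpect]
  exact bernoulliExpect_mono (fun e he => hq e ((Set.Finite.mem_toFinset _).1 he))
    (Set.indicator_le_indicator_of_subset hAB fun _ => zero_le_one)

variable [DecidableEq V]

theorem card_filter_not_inter_subset_le [Fintype V] {F K : Finset V}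
    (h𝒦 : ∀ L ∈ 𝒦, #L = r ∧ F ⊆ L) (hK : K ∈ 𝒦) :
    #{L ∈ 𝒦 | ¬ K ∩ L ⊆ F} ≤ (r - #F) * Fintype.card V ^ (r - (#F + 1)) := by
  have hcover : {L ∈ 𝒦 | ¬ K ∩ L ⊆ F} ⊆ (K \ F).biUnion fun x => {L ∈ 𝒦 | x ∈ L} := by
    intro L hL
    obtain ⟨hL𝒦, hLF⟩ := mem_filter.1 hL
    obtain ⟨x, hx, hxF⟩ := not_subset.1 hLF
    exact mem_biUnion.2 ⟨x, mem_sdiff.2 ⟨(mem_inter.1 hx).1, hxF⟩,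
      mem_filter.2 ⟨hL𝒦, (mem_inter.1 hx).2⟩⟩
  have hstar : ∀ x ∈ K \ F, #{L ∈ 𝒦 | x ∈ L} ≤ Fintype.card V ^ (r - (#F + 1)) := by
    intro x hx
    rw [← card_insert_of_notMem (mem_sdiff.1 hx).2]
    refine card_le_card_pow_of_forall_subset fun L hL => ?_
    obtain ⟨hL𝒦, hxL⟩ := mem_filter.1 hL
    exact ⟨(h𝒦 L hL𝒦).1, insert_subset hxL (h𝒦 L hL𝒦).2⟩
  calc #{L ∈ 𝒦 | ¬ K ∩ L ⊆ F} ≤ #(K \ F) * Fintype.card V ^ (r - (#F + 1)) :=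
        (card_le_card hcover).trans (card_biUnion_le_card_mul _ _ _ hstar)
    _ = (r - #F) * Fintype.card V ^ (r - (#F + 1)) := by
        rw [card_sdiff_of_subset (h𝒦 K hK).2, (h𝒦 K hK).1]

/-- The edges of the clique on `K` other than `e₀`: the edges whose presence makes `e₀` close the
clique on `K`. -/
def closingEdges (K : Finset V) (e₀ : Sym2 V) : Finset (Sym2 V) :=
  {e ∈ K.sym2 | ¬ e.IsDiag ∧ e ≠ e₀}

theorem mk_mem_closingEdges {K : Finset V} {e₀ : Sym2 V} {u v : V} :
    s(u, v) ∈ closingEdges K e₀ ↔ u ∈ K ∧ v ∈ K ∧ u ≠ v ∧ s(u, v) ≠ e₀ := by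
  simp only [closingEdges, mem_filter, mk_mem_sym2_iff, Sym2.mk_isDiag_iff, and_assoc, ne_eq]

theorem coe_closingEdges (K : Finset V) (e₀ : Sym2 V) :
    (closingEdges K e₀ : Set (Sym2 V)) = cliqueEdges K \ {e₀} := by
  ext e
  induction e with | _ u v
  rw [mem_coe, mk_mem_closingEdges]
  constructor
  · rintro ⟨hu, hv, huv, he⟩
    exact ⟨⟨u, hu, v, hv, huv, rfl⟩, he⟩
  · rintro ⟨⟨x, hx, y, hy, hxy, he⟩, hne⟩
    rcases Sym2.eq_iff.1 he with ⟨rfl, rfl⟩ | ⟨rfl, rfl⟩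
    · exact ⟨hx, hy, hxy, hne⟩
    · exact ⟨hy, hx, hxy.symm, hne⟩

theorem coe_closingEdges_subset_edgeSet {G : SimpleGraph V} {K : Finset V} (hK : G.IsClique K)
    (e₀ : Sym2 V) : (closingEdges K e₀ : Set (Sym2 V)) ⊆ G.edgeSet := by
  intro e he
  induction e with | _ u v
  obtain ⟨hu, hv, huv, -⟩ := mk_mem_closingEdges.1 (mem_coe.1 he)
  exact hK hu hv huv

theorem disjoint_closingEdges {K L : Finset V} {v₁ v₂ : V} (hKL : K ∩ L ⊆ {v₁, v₂}) :
    Disjoint (closingEdges K s(v₁, v₂)) (closingEdges L s(v₁, v₂)) := by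
  refine disjoint_left.2 fun e heK heL => ?_
  induction e with | _ u v
  obtain ⟨huK, hvK, huv, hne⟩ := mk_mem_closingEdges.1 heK
  obtain ⟨huL, hvL, -⟩ := mk_mem_closingEdges.1 heL
  have hu := mem_insert.1 (hKL (mem_inter.2 ⟨huK, huL⟩))
  have hv := mem_insert.1 (hKL (mem_inter.2 ⟨hvK, hvL⟩))
  grind [Sym2.eq_swap]

theorem intersectionGraph_closingEdges_colorable [Fintype V] {v₁ v₂ : V} (hv : v₁ ≠ v₂)
    (h𝒦 : ∀ K ∈ 𝒦, #K = r ∧ v₁ ∈ K ∧ v₂ ∈ K) :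
    (intersectionGraph fun K : 𝒦 => closingEdges (K : Finset V) s(v₁, v₂)).Colorable
      ((r - 2) * Fintype.card V ^ (r - 3) + 1) := by
  classical
  refine colorable_of_degree_le _ fun K => ?_
  have hsub : ∀ L ∈ 𝒦, #L = r ∧ ({v₁, v₂} : Finset V) ⊆ L := fun L hL =>
    ⟨(h𝒦 L hL).1, insert_subset (h𝒦 L hL).2.1 (singleton_subset_iff.2 (h𝒦 L hL).2.2)⟩
  have hneighbor : ∀ L ∈ (intersectionGraph fun K : 𝒦 =>
      closingEdges (K : Finset V) s(v₁, v₂)).neighborFinset K,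
      (L : Finset V) ∈ ({L ∈ 𝒦 | ¬ (K : Finset V) ∩ L ⊆ {v₁, v₂}} : Finset (Finset V)) :=
    fun L hL => mem_filter.2 ⟨L.2, fun h =>
      ((SimpleGraph.mem_neighborFinset ..).1 hL).2 (disjoint_closingEdges h)⟩
  calc _ ≤ #{L ∈ 𝒦 | ¬ (K : Finset V) ∩ L ⊆ {v₁, v₂}} :=
        card_le_card_of_injOn _ hneighbor Subtype.val_injective.injOn
    _ ≤ _ := by simpa only [card_pair hv] using card_filter_not_inter_subset_le hsub K.2

theorem edgeSubsetProb_abs_containedCount_sub_le [Fintype V] {G : SimpleGraph V} {v₁ v₂ : V}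
    (hv : v₁ ≠ v₂) (h𝒦 : ∀ K ∈ 𝒦, G.IsNClique r K ∧ v₁ ∈ K ∧ v₂ ∈ K) {q : Sym2 V → ℝ}
    (hq : ∀ e ∈ G.edgeSet, 0 ≤ q e ∧ q e ≤ 1) {η : ℝ} (hη0 : 0 ≤ η) (hη2 : η ≤ 2) :
    edgeSubsetProb G q {E | η * expectedCount q 𝒦 (closingEdges · s(v₁, v₂)) ≤
      |containedCount 𝒦 (closingEdges · s(v₁, v₂)) E -
        expectedCount q 𝒦 (closingEdges · s(v₁, v₂))|} ≤
      2 * Real.exp (-(η ^ 2 / 4 * expectedCount q 𝒦 (closingEdges · s(v₁, v₂)) /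
        ((r - 2) * Fintype.card V ^ (r - 3) + 1 : ℕ))) := by
  obtain ⟨C⟩ := intersectionGraph_closingEdges_colorable hv fun K hK =>
    ⟨(h𝒦 K hK).1.card_eq, (h𝒦 K hK).2⟩
  have hsub : ∀ K : 𝒦, closingEdges (K : Finset V) s(v₁, v₂) ⊆
      (Set.toFinite G.edgeSet).toFinset := fun K =>
    Set.Finite.subset_toFinset.2 (coe_closingEdges_subset_edgeSet (h𝒦 K K.2).1.isClique _)
  have htail := bernoulliExpect_indicator_abs_le_two_mul_exp
    (fun e he => hq e ((Set.Finite.mem_toFinset _).1 he)) hsub C hη0 hη2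
  simp only [expectedCount_attach q 𝒦 (closingEdges · s(v₁, v₂)),
    containedCount_attach 𝒦 (closingEdges · s(v₁, v₂)), Fintype.card_fin] at htail
  rwa [edgeSubsetProb_eq_bernoulliExpect]

end Cliques

theorem eventually_two_mul_exp_neg_le {c β γ : ℝ} (hc : 0 < c) (hγ : 0 < γ) (hβγ : β < γ) :
    ∀ᶠ n : ℝ in atTop, 2 * Real.exp (-(c * n ^ γ)) ≤ Real.exp (-n ^ β) := by
  have hsmall : ∀ᶠ n : ℝ in atTop, n ^ (-(γ - β)) ≤ c / 2 :=
    (tendsto_rpow_neg_atTop (sub_pos.2 hβγ)).eventually_le_const (half_pos hc)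
  have hlarge : ∀ᶠ n : ℝ in atTop, 2 / c ≤ n ^ γ := (tendsto_rpow_atTop hγ).eventually_ge_atTop _
  filter_upwards [hsmall, hlarge, eventually_gt_atTop 0] with n hsmall hlarge hn
  have hβ : n ^ β ≤ n ^ γ * (c / 2) := by
    calc n ^ β = n ^ γ * n ^ (-(γ - β)) := by rw [← Real.rpow_add hn]; ring_nf
      _ ≤ n ^ γ * (c / 2) := by gcongr
  have hone : 2 ≤ n ^ γ * c := (div_le_iff₀ hc).1 hlarge
  calc 2 * Real.exp (-(c * n ^ γ)) ≤ Real.exp 1 * Real.exp (-(c * n ^ γ)) := by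
        gcongr
        linarith [Real.add_one_le_exp (1 : ℝ)]
    _ ≤ Real.exp (-n ^ β) := by
        rw [← Real.exp_add]
        gcongr
        linarith

theorem cast_sub_two_mul_pow_add_one_le {r N : ℕ} {C n : ℝ} (hr : 2 ≤ r) (hN : 0 < N)
    (hNn : N ≤ C * n) :
    (((r - 2) * N ^ (r - 3) + 1 : ℕ) : ℝ) ≤ r * C ^ (r - 3) * n ^ (r - 3) := by
  calc (((r - 2) * N ^ (r - 3) + 1 : ℕ) : ℝ) ≤ (r * N ^ (r - 3) : ℕ) := by
        have hpow : 0 < N ^ (r - 3) := by positivity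
        obtain ⟨s, rfl⟩ := Nat.exists_eq_add_of_le' hr
        exact_mod_cast (by rw [Nat.add_sub_cancel]; nlinarith)
    _ ≤ r * (C * n) ^ (r - 3) := by
        push_cast
        gcongr
    _ = r * C ^ (r - 3) * n ^ (r - 3) := by rw [mul_pow, mul_assoc]

section Partite

variable {κ : Type*} {G : SimpleGraph V}

theorem exists_coloring_of_partition {Vs : κ → Set V}
    (hdisj : ∀ k l, k ≠ l → Disjoint (Vs k) (Vs l)) (hcover : ∀ x, ∃ k, x ∈ Vs k)
    (hindep : ∀ k, ∀ u ∈ Vs k, ∀ v ∈ Vs k, ¬ G.Adj u v) :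
    ∃ C : G.Coloring κ, ∀ {x k}, x ∈ Vs k ↔ C x = k := by
  choose c hc using hcover
  refine ⟨SimpleGraph.Coloring.mk c fun {u v} huv huv' => ?_, fun {x k} =>
    ⟨fun hx => ?_, fun hx => hx ▸ hc x⟩⟩
  · exact hindep (c v) u (huv' ▸ hc u) v (hc v) huv
  · by_contra hne
    exact Set.disjoint_left.1 (hdisj _ _ hne) (hc x) hx

theorem card_le_mul_of_forall_ncard_le [Fintype V] [Fintype κ] {Vs : κ → Set V} {n : ℕ}
    (hcover : ∀ x, ∃ k, x ∈ Vs k) (hsize : ∀ k, (Vs k).ncard ≤ n) :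
    Fintype.card V ≤ Fintype.card κ * n := by
  calc Fintype.card V = (⋃ k, Vs k).ncard := by
        rw [Set.iUnion_eq_univ_iff.2 hcover, Set.ncard_univ, Nat.card_eq_fintype_card]
    _ ≤ ∑ k, (Vs k).ncard := Set.ncard_iUnion_le_of_fintype _
    _ ≤ Fintype.card κ * n := by
        simpa only [card_univ, smul_eq_mul] using sum_le_card_nsmul univ _ n fun k _ => hsize k

variable [DecidableEq V] [DecidableEq κ]

theorem prod_closingEdges_map {f : V → κ} {K : Finset V} (hf : Set.InjOn f K) {v₁ v₂ : V}
    (h₁ : v₁ ∈ K) (h₂ : v₂ ∈ K) (p : Sym2 κ → ℝ) :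
    ∏ e ∈ closingEdges K s(v₁, v₂), p (e.map f) =
      ∏ e ∈ closingEdges (K.image f) s(f v₁, f v₂), p e := by
  have hmap : ∀ {u v x y}, u ∈ K → v ∈ K → x ∈ K → y ∈ K →
      (s(f u, f v) = s(f x, f y) ↔ s(u, v) = s(x, y)) := fun hu hv hx hy => by
    simp only [Sym2.eq_iff, hf.eq_iff hu hx, hf.eq_iff hu hy, hf.eq_iff hv hx, hf.eq_iff hv hy]
  refine prod_nbij (Sym2.map f) ?_ ?_ ?_ fun _ _ => rfl
  · intro e he
    induction e with | _ u v
    obtain ⟨hu, hv, huv, hne⟩ := mk_mem_closingEdges.1 he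
    exact mk_mem_closingEdges.2 ⟨mem_image_of_mem f hu, mem_image_of_mem f hv, hf.ne hu hv huv,
      (hmap hu hv h₁ h₂).not.2 hne⟩
  · intro e he e' he' hee'
    induction e with | _ u v
    induction e' with | _ x y
    obtain ⟨hu, hv, -⟩ := mk_mem_closingEdges.1 he
    obtain ⟨hx, hy, -⟩ := mk_mem_closingEdges.1 he'
    exact (hmap hu hv hx hy).1 hee'
  · intro e he
    induction e with | _ k l
    obtain ⟨hk, hl, hkl, hne⟩ := mk_mem_closingEdges.1 he
    obtain ⟨u, hu, rfl⟩ := mem_image.1 hk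
    obtain ⟨v, hv, rfl⟩ := mem_image.1 hl
    exact ⟨s(u, v), mk_mem_closingEdges.2 ⟨hu, hv, ne_of_apply_ne f hkl,
      (hmap hu hv h₁ h₂).not.1 hne⟩, rfl⟩

theorem expectedCount_closingEdges_eq_card_mul [Fintype κ] (C : G.Coloring κ)
    {𝒦 : Finset (Finset V)} {v₁ v₂ : V}
    (h𝒦 : ∀ K ∈ 𝒦, G.IsNClique (Fintype.card κ) K ∧ v₁ ∈ K ∧ v₂ ∈ K) {p : Sym2 κ → ℝ}
    {q : Sym2 V → ℝ} (hqp : ∀ e ∈ G.edgeSet, q e = p (e.map C)) :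
    expectedCount q 𝒦 (closingEdges · s(v₁, v₂)) =
      #𝒦 * ∏ e ∈ closingEdges univ s(C v₁, C v₂), p e := by
  rw [← nsmul_eq_mul]
  refine sum_eq_card_nsmul fun K hK => ?_
  obtain ⟨hclique, h₁, h₂⟩ := h𝒦 K hK
  have hinj : Set.InjOn C K := fun u hu v hv huv =>
    by_contra fun hne => C.valid (hclique.isClique hu hv hne) huv
  have himage : K.image C = univ :=
    eq_univ_of_card _ ((card_image_of_injOn hinj).trans hclique.card_eq)
  rw [← himage, ← prod_closingEdges_map hinj h₁ h₂]
  exact prod_congr rfl fun e he => hqp e (coe_closingEdges_subset_edgeSet hclique.isClique _ he)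

theorem containedCount_closingEdges_eq_ncard (𝒦 : Finset (Finset V)) (e₀ : Sym2 V)
    (E : Finset (Sym2 V)) :
    containedCount 𝒦 (closingEdges · e₀) E =
      {K | K ∈ 𝒦 ∧ cliqueEdges K \ {e₀} ⊆ (E : Set (Sym2 V))}.ncard := by
  rw [containedCount, ← Set.ncard_coe_finset]
  simp only [coe_filter, ← coe_closingEdges, coe_subset]

end Partite

theorem lt_abs_sub_iff_not_le_and_le {η μ x : ℝ} :
    η * μ < |x - μ| ↔ ¬ ((1 - η) * μ ≤ x ∧ x ≤ (1 + η) * μ) := by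
  rw [← not_le, abs_sub_le_iff]
  constructor <;> intro h h' <;> exact h ⟨by linarith [h'.1, h'.2], by linarith [h'.1, h'.2]⟩

theorem stmt9_general {r : ℕ} (hr : 3 ≤ r) {β γ η C : ℝ} (hγ : 0 < γ) (hβγ : β < γ) (hη : 0 < η)
    (hC : 0 < C) :
    ∀ᶠ n : ℝ in atTop, ∀ (V : Type*) [Fintype V] [DecidableEq V] (G : SimpleGraph V),
      (Fintype.card V : ℝ) ≤ C * n →
      ∀ v₁ v₂ : V, v₁ ≠ v₂ →
      ∀ 𝒦 : Finset (Finset V), (∀ K ∈ 𝒦, G.IsNClique r K ∧ v₁ ∈ K ∧ v₂ ∈ K) →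
      ∀ q : Sym2 V → ℝ, (∀ e ∈ G.edgeSet, 0 ≤ q e ∧ q e ≤ 1) →
      ∀ μ : ℝ, expectedCount q 𝒦 (closingEdges · s(v₁, v₂)) = μ →
      n ^ ((r : ℝ) - 3 + γ) ≤ μ →
      edgeSubsetProb G q {E | η * μ < |containedCount 𝒦 (closingEdges · s(v₁, v₂)) E - μ|} ≤
        Real.exp (-n ^ β) := by
  set ε : ℝ := min η 2
  have hε : 0 < ε := lt_min hη two_pos
  set c : ℝ := ε ^ 2 / 4 / (r * C ^ (r - 3))
  have hc : 0 < c := by positivity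
  filter_upwards [eventually_two_mul_exp_neg_le hc hγ hβγ, eventually_gt_atTop 0] with n hexp hn
  intro V _ _ G hV v₁ v₂ hv 𝒦 h𝒦 q hq μ hμ hnμ
  set D : ℕ := (r - 2) * Fintype.card V ^ (r - 3) + 1
  have hD : (D : ℝ) ≤ r * C ^ (r - 3) * n ^ (r - 3) :=
    cast_sub_two_mul_pow_add_one_le (by lia) (Fintype.card_pos_iff.2 ⟨v₁⟩) hV
  have hμ0 : 0 ≤ μ := (Real.rpow_nonneg hn.le _).trans hnμ
  have hrate : c * n ^ γ ≤ ε ^ 2 / 4 * μ / D := by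
    have hsplit : n ^ ((r : ℝ) - 3 + γ) = n ^ (r - 3) * n ^ γ := by
      rw [Real.rpow_add hn, ← Real.rpow_natCast, Nat.cast_sub hr, Nat.cast_ofNat]
    calc c * n ^ γ = ε ^ 2 / 4 * n ^ ((r : ℝ) - 3 + γ) / (r * C ^ (r - 3) * n ^ (r - 3)) := by
          rw [hsplit]
          simp only [c]
          field_simp
      _ ≤ ε ^ 2 / 4 * μ / D := by gcongr
  calc _ ≤ edgeSubsetProb G q {E | ε * μ ≤ |containedCount 𝒦 (closingEdges · s(v₁, v₂)) E - μ|} :=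
        edgeSubsetProb_mono hq fun E hE =>
          (mul_le_mul_of_nonneg_right (min_le_left η 2) hμ0).trans hE.le
    _ ≤ 2 * Real.exp (-(ε ^ 2 / 4 * μ / D)) := by
        subst hμ
        exact edgeSubsetProb_abs_containedCount_sub_le hv h𝒦 hq hε.le (min_le_right η 2)
    _ ≤ 2 * Real.exp (-(c * n ^ γ)) := by gcongr
    _ ≤ Real.exp (-n ^ β) := hexp

theorem stmt9 (r : ℕ) (hr : 3 ≤ r) (γ η : ℝ) (hγ : 0 < γ) (hη : 0 < η) :
    ∃ β : ℝ, 0 < β ∧ ∃ m₀ : ℕ, ∀ m : ℕ, m₀ ≤ m →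
      ∀ (V : Type) [Fintype V] (G : SimpleGraph V) (Vs : Fin r → Set V),
        -- `G` is `r`-partite with classes `Vs 0, …, Vs (r-1)` of size `m` or `m+1`
        (∀ k l, k ≠ l → Disjoint (Vs k) (Vs l)) →
        (∀ x : V, ∃ k, x ∈ Vs k) →
        (∀ k, ∀ u ∈ Vs k, ∀ v ∈ Vs k, ¬ G.Adj u v) →
        (∀ l, (Vs l).ncard = m ∨ (Vs l).ncard = m + 1) →
      -- `v₁v₂` is an edge between `V₁` and `V₂`
      ∀ v₁ v₂ : V, v₁ ∈ Vs ⟨0, by omega⟩ → v₂ ∈ Vs ⟨1, by omega⟩ → G.Adj v₁ v₂ →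
      -- `𝒦` is a family of copies of `K_r` in `G`, each containing the edge `v₁v₂`
      ∀ 𝒦 : Finset (Finset V),
        (∀ K ∈ 𝒦, K.card = r ∧ (∀ u ∈ K, ∀ v ∈ K, u ≠ v → G.Adj u v) ∧
          v₁ ∈ K ∧ v₂ ∈ K) →
      ∀ δ : ℝ, (𝒦.card : ℝ) = δ * (m : ℝ) ^ (r - 2) →
      -- the retention probabilities `p_{kl}`
      ∀ p : Sym2 (Fin r) → ℝ,
        (∀ k l : Fin r, k ≠ l → 0 < p s(k, l) ∧ p s(k, l) ≤ 1) →
      ∀ P : ℝ,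
        P = ∏ e ∈ Finset.univ.filter (fun e : Sym2 (Fin r) =>
              ¬ e.IsDiag ∧ e ≠ s((⟨0, by omega⟩ : Fin r), (⟨1, by omega⟩ : Fin r))), p e →
        δ * (m : ℝ) ^ (r - 2) * P ≥ ((m : ℝ) + 1) ^ ((r : ℝ) - 3 + γ) →
      -- `q` assigns to each edge of `G` the probability of its pair of classes
      ∀ q : Sym2 V → ℝ,
        (∀ k l : Fin r, ∀ u ∈ Vs k, ∀ v ∈ Vs l, G.Adj u v → q s(u, v) = p s(k, l)) →
      -- the number of copies from `𝒦` closed by `v₁v₂` in the random subgraph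
      ∀ closedCount : Finset (Sym2 V) → ℕ,
        (∀ E' : Finset (Sym2 V), closedCount E' =
          {K | K ∈ 𝒦 ∧ cliqueEdges K \ {s(v₁, v₂)} ⊆ (E' : Set (Sym2 V))}.ncard) →
      edgeSubsetProb G q
        {E' | ¬ ((1 - η) * (P * δ * (m : ℝ) ^ (r - 2)) ≤ (closedCount E' : ℝ) ∧
                 (closedCount E' : ℝ) ≤ (1 + η) * (P * δ * (m : ℝ) ^ (r - 2)))}
        ≤ Real.exp (-(m : ℝ) ^ β) := by
  have hlarge := (tendsto_atTop_add_const_right _ 1 tendsto_natCast_atTop_atTop).eventually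
    (stmt9_general.{0} hr hγ (half_lt_self hγ) hη (C := r) (by positivity))
  obtain ⟨m₀, hm₀⟩ := eventually_atTop.1 hlarge
  refine ⟨γ / 2, half_pos hγ, m₀, fun m hm V _ G Vs hdisj hcover hindep hsize v₁ v₂ hv₁ hv₂ hadj
    𝒦 h𝒦 δ hδ p hp P hP hbig q hq X hX => ?_⟩
  classical
  obtain ⟨C, hC⟩ := exists_coloring_of_partition hdisj hcover hindep
  have hqp : ∀ e ∈ G.edgeSet, q e = p (e.map C) :=
    Sym2.ind fun u v huv => hq _ _ u (hC.2 rfl) v (hC.2 rfl) huv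
  have hq01 : ∀ e ∈ G.edgeSet, 0 ≤ q e ∧ q e ≤ 1 := Sym2.ind fun u v huv =>
    (hqp _ huv).symm ▸ (hp _ _ (C.valid huv)).imp_left le_of_lt
  have hclique : ∀ K ∈ 𝒦, G.IsNClique r K ∧ v₁ ∈ K ∧ v₂ ∈ K := fun K hK =>
    let ⟨hcard, hK, hmem⟩ := h𝒦 K hK
    ⟨⟨fun u hu v hv => hK u hu v hv, hcard⟩, hmem⟩
  have hV : (Fintype.card V : ℝ) ≤ r * (m + 1) := by
    exact_mod_cast Fintype.card_fin r ▸ card_le_mul_of_forall_ncard_le hcover fun l => by grind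
  have hμ : expectedCount q 𝒦 (closingEdges · s(v₁, v₂)) = P * δ * m ^ (r - 2) := by
    rw [expectedCount_closingEdges_eq_card_mul C (by simpa using hclique) hqp, hC.1 hv₁, hC.1 hv₂,
      hδ, hP, closingEdges, sym2_univ]
    ring
  simp only [hX, ← containedCount_closingEdges_eq_ncard, ← lt_abs_sub_iff_not_le_and_le]
  refine (hm₀ m hm V G hV v₁ v₂ hadj.ne 𝒦 hclique q hq01 _ hμ (by linarith)).trans ?_
  gcongr
  linarith

end RainbowDecomp
end

section
/- For every graph H with chromatic number at least 3, φ^R(n,H) = ex(n,H) + o(n²); that is, for every δ > 0 there exists n₀ such that for all n ≥ n₀, ex(n,H) ≤ φ^R(n,H) ≤ ex(n,H) + δn². -/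
namespace RainbowDecomp

variable {V : Type*} {W : Type*}

/-!
Let `χ(H) = k + 2`. Remove from the current vertex set `S` a set `A` of bounded size `L` consisting
of vertices of least degree, and take a maximal packing of rainbow copies of `H` whose colour class
`0` lies in `A` and whose other colour classes lie in `R = S \ A`. In the leave, all but `ηL`
vertices `v` of `A` have at most `k (|S| - d(v)) + 3η|S|` neighbours in `R`. Otherwise, as no vertex
of `R` has smaller degree than `v`, many vertices of `A` would have links rich in transversal
cliques `K_{k+1}`; a dense `(k+2)`-partite hypergraph contains large boxes, so the leave would
contain a large blow-up of `K_{k+2}`, in which `H` can be embedded greedily as a rainbow subgraph.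

As `χ(H) = k + 2`, class `0` sends an edge to each other class, so every packed copy uses at least
`k + 1` edges between `A` and `R`. Hence copies and surviving edges between `A` and `R` together
number at most `(k / (k + 1) + 4η) L |S|`. Iterating on `R` decomposes `G` into at most
`k / (k + 1) · n² / 2 + o(n²)` parts, which is the size of a Turán graph, up to `o(n²)`.
-/

universe u

section Boxes

open Finset

theorem pow_mul_card_le_sum_pow {ι : Type*} {s : Finset ι} {f : ι → ℝ} {a : ℝ}
    (hf : ∀ i ∈ s, 0 ≤ f i) (ha : 0 ≤ a) (h : a * #s ≤ ∑ i ∈ s, f i) (T : ℕ) :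
    a ^ T * #s ≤ ∑ i ∈ s, f i ^ T := by
  rcases T with _ | T
  · simp
  rcases s.eq_empty_or_nonempty with rfl | hs
  · simp
  have : (0 : ℝ) < #s := by exact_mod_cast hs.card_pos
  refine le_trans ?_ (pow_sum_div_card_le_sum_pow hf T)
  rw [le_div_iff₀ (by positivity)]
  calc a ^ (T + 1) * #s * (#s : ℝ) ^ T = (a * #s) ^ (T + 1) := by ring
    _ ≤ (∑ i ∈ s, f i) ^ (T + 1) := by gcongr

theorem pow_mul_card_le_factorial_mul_sum_choose {ι : Type*} {s : Finset ι} {d : ι → ℕ} {a : ℝ}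
    {T : ℕ} (ha : 0 ≤ a) (h : (a + T) * #s ≤ ∑ i ∈ s, (d i : ℝ)) :
    a ^ T * #s ≤ T.factorial * ∑ i ∈ s, ((d i).choose T : ℝ) := by
  have hshift : a * #s ≤ ∑ i ∈ s, ((d i + 1 - T : ℕ) : ℝ) := by
    have hpt (i : ι) : (d i : ℝ) - T ≤ ((d i + 1 - T : ℕ) : ℝ) := by
      rw [sub_le_iff_le_add]
      exact_mod_cast show d i ≤ d i + 1 - T + T by omega
    have hsum := sum_le_sum fun i (_ : i ∈ s) ↦ hpt i
    rw [sum_sub_distrib, sum_const, nsmul_eq_mul] at hsum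
    linarith
  refine (pow_mul_card_le_sum_pow (fun _ _ ↦ Nat.cast_nonneg _) ha hshift T).trans ?_
  rw [mul_sum]
  refine sum_le_sum fun i _ ↦ ?_
  exact_mod_cast (Nat.pow_sub_le_descFactorial _ _).trans
    (Nat.descFactorial_eq_factorial_mul_choose _ _).le

-- The Kővári–Sós–Turán double count, of the pairs `(Z, x)` in which the `T`-set `Z` lies in the
-- neighbourhood of `x`.
theorem exists_card_eq_le_card_filter_forall {α β : Type*} (r : α → β → Prop)
    [∀ y, DecidablePred (r y)] (Y : Finset α) (P : Finset β) {c : ℝ} {T : ℕ} (hc : 0 ≤ c)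
    (hT : T ≤ #Y) (hcT : 2 * T ≤ c * #Y)
    (h : c * (#Y * #P) ≤ ∑ y ∈ Y, (#{x ∈ P | r y x} : ℝ)) :
    ∃ Z ⊆ Y, #Z = T ∧ (c / 2) ^ T * #P ≤ #{x ∈ P | ∀ y ∈ Z, r y x} := by
  have hchoose : (c / 2 * #Y) ^ T * #P ≤
      T.factorial * ∑ x ∈ P, ((#{y ∈ Y | r y x}).choose T : ℝ) := by
    refine pow_mul_card_le_factorial_mul_sum_choose (by positivity) ?_
    have hdouble : ∑ y ∈ Y, (#{x ∈ P | r y x} : ℝ) = ∑ x ∈ P, (#{y ∈ Y | r y x} : ℝ) :=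
      mod_cast sum_card_bipartiteAbove_eq_sum_card_bipartiteBelow r
    rw [← hdouble]
    refine le_trans ?_ h
    nlinarith [Nat.cast_nonneg (α := ℝ) #P]
  have hdouble : ∑ x ∈ P, ((#{y ∈ Y | r y x}).choose T : ℝ) =
      ∑ Z ∈ powersetCard T Y, (#{x ∈ P | ∀ y ∈ Z, r y x} : ℝ) := by
    have hpow (x : β) : (#{y ∈ Y | r y x}).choose T = #{Z ∈ powersetCard T Y | ∀ y ∈ Z, r y x} := by
      rw [← card_powersetCard]
      congr 1
      ext Z
      simp only [mem_filter, mem_powersetCard, subset_iff]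
      grind
    simp_rw [hpow]
    exact_mod_cast (sum_card_bipartiteAbove_eq_sum_card_bipartiteBelow
      (fun (Z : Finset α) x ↦ ∀ y ∈ Z, r y x)).symm
  obtain ⟨Z, hZ, hcard⟩ : ∃ Z ∈ powersetCard T Y,
      (c / 2) ^ T * #P ≤ (#{x ∈ P | ∀ y ∈ Z, r y x} : ℝ) := by
    refine exists_le_of_sum_le (powersetCard_nonempty.2 hT) ?_
    rw [← hdouble, sum_const, nsmul_eq_mul, card_powersetCard]
    refine le_of_mul_le_mul_left ?_ (show (0 : ℝ) < T.factorial by positivity)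
    have hle : (T.factorial * (#Y).choose T : ℝ) ≤ (#Y : ℝ) ^ T := by
      exact_mod_cast (Nat.descFactorial_eq_factorial_mul_choose _ _).ge.trans
        (Nat.descFactorial_le_pow _ _)
    calc (T.factorial : ℝ) * ((#Y).choose T * ((c / 2) ^ T * #P))
        = (T.factorial * (#Y).choose T) * ((c / 2) ^ T * #P) := by ring
      _ ≤ (#Y : ℝ) ^ T * ((c / 2) ^ T * #P) := by gcongr
      _ = (c / 2 * #Y) ^ T * #P := by ring
      _ ≤ _ := hchoose
  exact ⟨Z, (mem_powersetCard.1 hZ).1, (mem_powersetCard.1 hZ).2, hcard⟩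

theorem card_eq_sum_card_filter_cons_mem {V : Type*} [DecidableEq V] {k : ℕ}
    {Y : Fin (k + 1) → Finset V} {D : Finset (Fin (k + 1) → V)} (hD : D ⊆ Fintype.piFinset Y) :
    #D = ∑ a ∈ Y 0, #{x ∈ Fintype.piFinset (Fin.tail Y) | Fin.cons a x ∈ D} := by
  have hmaps : ∀ t ∈ D, t 0 ∈ Y 0 := fun t ht ↦ Fintype.mem_piFinset.1 (hD ht) 0
  rw [card_eq_sum_card_fiberwise hmaps]
  refine sum_congr rfl fun a _ ↦ card_nbij' Fin.tail (Fin.cons (α := fun _ ↦ V) a) ?_ ?_ ?_ ?_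
  · intro t ht
    obtain ⟨htD, rfl⟩ := mem_filter.1 ht
    exact mem_filter.2 ⟨Fintype.mem_piFinset.2 fun i ↦ Fintype.mem_piFinset.1 (hD htD) i.succ,
      by rwa [Fin.cons_self_tail]⟩
  · intro x hx
    exact mem_filter.2 ⟨(mem_filter.1 hx).2, rfl⟩
  · intro t ht
    obtain ⟨-, rfl⟩ := mem_filter.1 ht
    exact Fin.cons_self_tail t
  · exact fun x _ ↦ Fin.tail_cons (α := fun _ ↦ V) a x

-- The Erdős box theorem for `k`-partite `k`-uniform hypergraphs, here sets `D` of `k`-tuples.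
theorem exists_piFinset_subset (k T : ℕ) {c : ℝ} (hc : 0 < c) : ∃ N : ℕ,
    ∀ {V : Type u} (Y : Fin k → Finset V) (D : Finset (Fin k → V)),
      (∀ i, N ≤ #(Y i)) → D ⊆ Fintype.piFinset Y → c * ∏ i, (#(Y i) : ℝ) ≤ #D →
      ∃ X : Fin k → Finset V, (∀ i, X i ⊆ Y i ∧ #(X i) = T) ∧ Fintype.piFinset X ⊆ D := by
  classical
  induction k generalizing c with
  | zero =>
    refine ⟨0, fun {V} Y D _ _ hcard ↦ ⟨fun _ ↦ ∅, fun i ↦ i.elim0, fun x _ ↦ ?_⟩⟩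
    have hpos : (0 : ℝ) < #D := lt_of_lt_of_le (by simpa using hc) hcard
    obtain ⟨z, hz⟩ := card_pos.1 (by exact_mod_cast hpos)
    rwa [Subsingleton.elim x z]
  | succ k ih =>
    obtain ⟨N, hN⟩ := ih (c := (c / 2) ^ T) (by positivity)
    refine ⟨max (max N T) ⌈2 * T / c⌉₊, fun {V} Y D hY hD hcard ↦ ?_⟩
    have hcT : 2 * T ≤ c * #(Y 0) := by
      rw [← div_le_iff₀' hc]
      exact Nat.ceil_le.1 ((le_max_right _ _).trans (hY 0))
    set P := Fintype.piFinset (Fin.tail Y) with hP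
    have hPcard : (#P : ℝ) = ∏ i, (#(Fin.tail Y i) : ℝ) := by
      rw [hP, Fintype.card_piFinset, Nat.cast_prod]
    obtain ⟨Z, hZY, hZT, hZ⟩ := exists_card_eq_le_card_filter_forall
      (fun a x ↦ (Fin.cons a x : Fin (k + 1) → V) ∈ D) (Y 0) P hc.le
      (le_trans (by simp) (hY 0)) hcT (by
        rw [Fin.prod_univ_succ, card_eq_sum_card_filter_cons_mem hD, Nat.cast_sum] at hcard
        rwa [hPcard])
    rw [hPcard] at hZ
    obtain ⟨X, hX, hXD⟩ := hN (Fin.tail Y) {x ∈ P | ∀ a ∈ Z, (Fin.cons a x : Fin (k + 1) → V) ∈ D}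
      (fun i ↦ le_trans (by simp) (hY i.succ)) (filter_subset _ _) hZ
    refine ⟨Fin.cons Z X, Fin.cases ⟨hZY, hZT⟩ hX, fun t ht ↦ ?_⟩
    rw [Fin.mem_piFinset_iff_zero_tail] at ht
    simpa only [Fin.cons_self_tail] using (mem_filter.1 (hXD ht.2)).2 (t 0) ht.1

end Boxes

section TransversalCliques

open Finset

variable {G G' : SimpleGraph V} {S S' N : Finset V} {v x : V}

open scoped Classical in
/-- The neighbours of `v` in `G` that lie in the vertex set `S`; `v` need not belong to `S`. -/
noncomputable def neighborsIn (G : SimpleGraph V) (S : Finset V) (v : V) : Finset V :=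
  {x ∈ S | G.Adj v x}

theorem mem_neighborsIn : x ∈ neighborsIn G S v ↔ x ∈ S ∧ G.Adj v x := by
  simp only [neighborsIn, mem_filter]

theorem neighborsIn_subset : neighborsIn G S v ⊆ S :=
  fun _ hx ↦ (mem_neighborsIn.1 hx).1

theorem neighborsIn_mono (h : G' ≤ G) (hS : S' ⊆ S) : neighborsIn G' S' v ⊆ neighborsIn G S v :=
  fun _ hx ↦ mem_neighborsIn.2 ⟨hS (mem_neighborsIn.1 hx).1, h (mem_neighborsIn.1 hx).2⟩

theorem card_neighborsIn_add_card_neighborsIn_sdiff (h : G' ≤ G) (S : Finset V) (v : V) :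
    #(neighborsIn G' S v) + #(neighborsIn (G \ G') S v) = #(neighborsIn G S v) := by
  classical
  rw [← card_union_of_disjoint]
  · congr 1
    ext x
    simp only [mem_union, mem_neighborsIn, SimpleGraph.sdiff_adj]
    have := @h v x
    tauto
  · refine disjoint_left.2 fun x hx hx' ↦ ?_
    exact (mem_neighborsIn.1 hx').2.2 (mem_neighborsIn.1 hx).2

theorem card_add_card_neighborsIn_le (h : N ⊆ S) (G : SimpleGraph V) (v : V) :
    #N + #(neighborsIn G S v) ≤ #S + #(neighborsIn G N v) := by
  classical
  rw [← card_union_add_card_inter]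
  refine add_le_add (card_le_card (union_subset h neighborsIn_subset)) (card_le_card fun x hx ↦ ?_)
  obtain ⟨hxN, hx⟩ := mem_inter.1 hx
  exact mem_neighborsIn.2 ⟨hxN, (mem_neighborsIn.1 hx).2⟩

open scoped Classical in
/-- The tuples of pairwise adjacent vertices of `G` whose `i`-th vertex lies in `Y i`: the labelled
copies of the complete graph on `ι` that are transversal to the family `Y`. -/
noncomputable def transversalCliques {ι : Type*} [Fintype ι] (G : SimpleGraph V)
    (Y : ι → Finset V) : Finset (ι → V) :=
  {t ∈ Fintype.piFinset Y | Pairwise fun i j ↦ G.Adj (t i) (t j)}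

theorem mem_transversalCliques {ι : Type*} [Fintype ι] {Y : ι → Finset V} {t : ι → V} :
    t ∈ transversalCliques G Y ↔ (∀ i, t i ∈ Y i) ∧ Pairwise fun i j ↦ G.Adj (t i) (t j) := by
  simp only [transversalCliques, mem_filter, Fintype.mem_piFinset]

theorem transversalCliques_subset {k : ℕ} {Y : Fin k → Finset V} :
    transversalCliques G Y ⊆ Fintype.piFinset Y :=
  fun _ ht ↦ Fintype.mem_piFinset.2 (mem_transversalCliques.1 ht).1

theorem transversalCliques_mono {ι : Type*} [Fintype ι] {Y Y' : ι → Finset V}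
    (h : ∀ i, Y i ⊆ Y' i) : transversalCliques G Y ⊆ transversalCliques G Y' := fun t ht ↦ by
  rw [mem_transversalCliques] at ht ⊢
  exact ⟨fun i ↦ h i (ht.1 i), ht.2⟩

theorem cons_mem_transversalCliques {k : ℕ} {A : Finset V} {Y : Fin k → Finset V}
    {t : Fin k → V} : (Fin.cons v t : Fin (k + 1) → V) ∈ transversalCliques G (Fin.cons A Y) ↔
      v ∈ A ∧ t ∈ transversalCliques G fun i ↦ neighborsIn G (Y i) v := by
  simp only [mem_transversalCliques, mem_neighborsIn, Fin.forall_fin_succ, Fin.cons_zero,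
    Fin.cons_succ, Pairwise, ne_eq, not_true_eq_false, false_implies, true_and,
    Fin.succ_ne_zero, (Fin.succ_ne_zero _).symm, not_false_eq_true, forall_const, Fin.succ_inj,
    G.adj_comm _ v]
  grind

theorem card_transversalCliques_cons (G : SimpleGraph V) {k : ℕ} (A : Finset V)
    (Y : Fin k → Finset V) : #(transversalCliques G (Fin.cons A Y : Fin (k + 1) → Finset V)) =
      ∑ v ∈ A, #(transversalCliques G fun i ↦ neighborsIn G (Y i) v) := by
  classical
  rw [card_eq_sum_card_filter_cons_mem transversalCliques_subset]
  refine sum_congr rfl fun v hv ↦ congrArg card ?_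
  ext t
  rw [mem_filter, cons_mem_transversalCliques, Fintype.mem_piFinset]
  refine ⟨fun h ↦ h.2.2, fun h ↦ ⟨fun i ↦ ?_, hv, h⟩⟩
  exact (mem_neighborsIn.1 ((mem_transversalCliques.1 h).1 i)).1

theorem pow_le_card_transversalCliques {b q : ℝ} (hb : 0 ≤ b) (hq : 0 ≤ q) (k : ℕ)
    (hdeg : ∀ x ∈ N, (#N : ℝ) ≤ #(neighborsIn G N x) + b) (hN : (k - 1) * b + q ≤ #N) :
    q ^ k ≤ #(transversalCliques G fun _ : Fin k ↦ N) := by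
  induction k generalizing N with
  | zero =>
    have h : Fin.elim0 ∈ transversalCliques G fun _ : Fin 0 ↦ N :=
      mem_transversalCliques.2 ⟨fun i ↦ i.elim0, fun i ↦ i.elim0⟩
    simpa using card_pos.2 ⟨_, h⟩
  | succ k ih =>
    push_cast at hN
    rw [add_sub_cancel_right] at hN
    have hlink (v : V) (hv : v ∈ N) :
        q ^ k ≤ #(transversalCliques G fun _ : Fin k ↦ neighborsIn G N v) := by
      refine ih (fun x hx ↦ ?_) (by linarith [hdeg v hv])
      have hx' := card_add_card_neighborsIn_le (neighborsIn_subset (G := G) (S := N) (v := v)) G x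
      rify at hx'
      linarith [hdeg x (neighborsIn_subset hx)]
    have hcons : (fun _ : Fin (k + 1) ↦ N) = Fin.cons N fun _ ↦ N :=
      (Fin.cons_self_tail fun _ ↦ N).symm
    rw [hcons, card_transversalCliques_cons, pow_succ', Nat.cast_sum]
    calc q * q ^ k ≤ #N * q ^ k := by gcongr; nlinarith [Nat.cast_nonneg (α := ℝ) k]
      _ = ∑ _v ∈ N, q ^ k := by rw [sum_const, nsmul_eq_mul]
      _ ≤ _ := sum_le_sum hlink

end TransversalCliques

section Packings

open Finset

variable {H : SimpleGraph W} {G G' : SimpleGraph V} {χ : Sym2 V → ℕ} {f : W → V}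
  {F F' : Set (W → V)} {P : Finset (Sym2 V)} {𝒜 ℬ : Finset (Finset (Sym2 V))}

theorem ProperEdgeColoring.mono (h : ProperEdgeColoring G' χ) (hG : G ≤ G') :
    ProperEdgeColoring G χ :=
  fun _ _ he he' ↦ h (SimpleGraph.edgeSet_mono hG he) (SimpleGraph.edgeSet_mono hG he')

/-- `f` embeds `H` into `G` as a rainbow subgraph under the edge coloring `χ`. -/
structure IsRainbowEmbedding (H : SimpleGraph W) (G : SimpleGraph V) (χ : Sym2 V → ℕ)
    (f : W → V) : Prop where
  injective : Function.Injective f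
  map_adj : ∀ ⦃a b⦄, H.Adj a b → G.Adj (f a) (f b)
  injOn : Set.InjOn χ (Sym2.map f '' H.edgeSet)

theorem IsRainbowEmbedding.mono (h : IsRainbowEmbedding H G χ f) (hG : G ≤ G') :
    IsRainbowEmbedding H G' χ f :=
  ⟨h.injective, fun _ _ hab ↦ hG (h.map_adj hab), h.injOn⟩

theorem IsRainbowEmbedding.image_edgeSet_subset (h : IsRainbowEmbedding H G χ f) :
    Sym2.map f '' H.edgeSet ⊆ G.edgeSet := by
  rintro _ ⟨e, he, rfl⟩
  induction e with
  | _ a b => exact h.map_adj he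

/-- `𝒜` is a family of pairwise edge-disjoint rainbow copies of `H` in `G`, each given by its edge
set. The set `F` restricts the embeddings that may be used, for instance to those that respect a
partition of the vertices; `F = Set.univ` is the unrestricted notion. -/
structure IsRainbowPacking (H : SimpleGraph W) (G : SimpleGraph V) (χ : Sym2 V → ℕ)
    (F : Set (W → V)) (𝒜 : Finset (Finset (Sym2 V))) : Prop where
  exists_embedding : ∀ P ∈ 𝒜, ∃ f ∈ F, IsRainbowEmbedding H G χ f ∧
    (P : Set (Sym2 V)) = Sym2.map f '' H.edgeSet
  pairwiseDisjoint : (𝒜 : Set (Finset (Sym2 V))).PairwiseDisjoint id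

/-- The leave of a packing `𝒜` of `G`: the graph of the edges of `G` in no member of `𝒜`. -/
def leave (G : SimpleGraph V) (𝒜 : Finset (Finset (Sym2 V))) : SimpleGraph V :=
  G.deleteEdges {e | ∃ P ∈ 𝒜, e ∈ P}

theorem mem_edgeSet_leave {e : Sym2 V} :
    e ∈ (leave G 𝒜).edgeSet ↔ e ∈ G.edgeSet ∧ ∀ P ∈ 𝒜, e ∉ P := by
  simp [leave]

theorem leave_le : leave G 𝒜 ≤ G :=
  SimpleGraph.deleteEdges_le _

theorem leave_empty (G : SimpleGraph V) : leave G ∅ = G := by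
  simp [leave]

theorem leave_union [DecidableEq V] (G : SimpleGraph V) (𝒜 ℬ : Finset (Finset (Sym2 V))) :
    leave G (𝒜 ∪ ℬ) = leave (leave G 𝒜) ℬ := by
  rw [leave, leave, leave, SimpleGraph.deleteEdges_deleteEdges]
  congr 1
  ext e
  simp only [mem_union, Set.mem_ofPred_eq, Set.mem_union]
  grind

theorem sdiff_leave_adj {a b : V} :
    (G \ leave G 𝒜).Adj a b ↔ G.Adj a b ∧ ∃ P ∈ 𝒜, s(a, b) ∈ P := by
  simp only [SimpleGraph.sdiff_adj, leave, SimpleGraph.deleteEdges_adj, Set.mem_ofPred_eq]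
  grind

theorem isRainbowPacking_empty (H : SimpleGraph W) (G : SimpleGraph V) (χ : Sym2 V → ℕ)
    (F : Set (W → V)) : IsRainbowPacking H G χ F ∅ :=
  ⟨by simp, by simp⟩

theorem IsRainbowEmbedding.isRainbowPacking_singleton (h : IsRainbowEmbedding H G χ f)
    (hf : f ∈ F) (hP : (P : Set (Sym2 V)) = Sym2.map f '' H.edgeSet) :
    IsRainbowPacking H G χ F {P} :=
  ⟨fun Q hQ ↦ ⟨f, hf, h, by rw [mem_singleton.1 hQ, hP]⟩, by simp⟩

namespace IsRainbowPacking

theorem mono (h : IsRainbowPacking H G χ F 𝒜) (hG : G ≤ G') (hF : F ⊆ F') :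
    IsRainbowPacking H G' χ F' 𝒜 := by
  refine ⟨fun P hP ↦ ?_, h.pairwiseDisjoint⟩
  obtain ⟨f, hf, hfG, hfP⟩ := h.exists_embedding P hP
  exact ⟨f, hF hf, hfG.mono hG, hfP⟩

theorem subset_edgeSet (h : IsRainbowPacking H G χ F 𝒜) (hP : P ∈ 𝒜) :
    (P : Set (Sym2 V)) ⊆ G.edgeSet := by
  obtain ⟨f, -, hf, hfP⟩ := h.exists_embedding P hP
  exact hfP ▸ hf.image_edgeSet_subset

theorem union [DecidableEq V] (h𝒜 : IsRainbowPacking H G χ F 𝒜)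
    (hℬ : IsRainbowPacking H (leave G 𝒜) χ F ℬ) : IsRainbowPacking H G χ F (𝒜 ∪ ℬ) := by
  refine ⟨fun P hP ↦ ?_, ?_⟩
  · rcases mem_union.1 hP with hP | hP
    · exact h𝒜.exists_embedding P hP
    · exact (hℬ.mono leave_le subset_rfl).exists_embedding P hP
  · rw [coe_union]
    refine h𝒜.pairwiseDisjoint.union hℬ.pairwiseDisjoint fun P hP Q hQ _ ↦ ?_
    exact disjoint_left.2 fun e heP heQ ↦
      (mem_edgeSet_leave.1 (hℬ.subset_edgeSet hQ heQ)).2 P hP heP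

theorem exists_maximal [Finite V] [Finite W] (hH : H ≠ ⊥) (G : SimpleGraph V) (χ : Sym2 V → ℕ)
    (F : Set (W → V)) : ∃ 𝒜, IsRainbowPacking H G χ F 𝒜 ∧
      ∀ f ∈ F, ¬ IsRainbowEmbedding H (leave G 𝒜) χ f := by
  classical
  obtain ⟨𝒜, h𝒜, hmax⟩ := Set.exists_max_image {𝒜 | IsRainbowPacking H G χ F 𝒜} card
    (Set.toFinite _) ⟨∅, isRainbowPacking_empty H G χ F⟩
  refine ⟨𝒜, h𝒜, fun f hfF hf ↦ ?_⟩
  obtain ⟨P, hP⟩ := ((Set.toFinite H.edgeSet).image (Sym2.map f)).exists_finset_coe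
  have hnew : P ∉ 𝒜 := fun hP𝒜 ↦ by
    obtain ⟨e, he⟩ := SimpleGraph.edgeSet_nonempty.2 hH
    have heP : Sym2.map f e ∈ (P : Set (Sym2 V)) := hP ▸ Set.mem_image_of_mem _ he
    exact (mem_edgeSet_leave.1 (hf.image_edgeSet_subset (hP ▸ heP))).2 P hP𝒜 heP
  have hcard := hmax _ (h𝒜.union (hf.isRainbowPacking_singleton hfF hP))
  rw [card_union_of_disjoint (disjoint_singleton_right.2 hnew), card_singleton] at hcard
  omega

end IsRainbowPacking

end Packings

section Decompositions

open Finset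

variable {H : SimpleGraph W} {G : SimpleGraph V} {χ : Sym2 V → ℕ} {F : Set (W → V)}
  {𝒜 : Finset (Finset (Sym2 V))} {n : ℕ}

theorem exists_isRainbowHDecomp_of_indexed {ι : Type*} [Finite ι] (Q : ι → Set (Sym2 V))
    (hsub : ∀ i, Q i ⊆ G.edgeSet) (huniq : ∀ e ∈ G.edgeSet, ∃! i, e ∈ Q i)
    (hQ : ∀ i, (∃ e, Q i = {e}) ∨ (IsCopyEdgeSet H G (Q i) ∧ Set.InjOn χ (Q i))) :
    ∃ P : Fin (Nat.card ι) → Set (Sym2 V), IsRainbowHDecomp G H χ P := by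
  refine ⟨Q ∘ (Finite.equivFin ι).symm, ⟨fun i ↦ hsub _, fun e he ↦ ?_⟩, fun i ↦ hQ _⟩
  obtain ⟨i, hi, hi'⟩ := huniq e he
  refine ⟨Finite.equivFin ι i, by simpa using hi, fun j hj ↦ ?_⟩
  rw [← hi' _ hj, Equiv.apply_symm_apply]

theorem IsRainbowPacking.exists_isRainbowHDecomp [Finite V] (h : IsRainbowPacking H G χ F 𝒜) :
    ∃ P : Fin (#𝒜 + eCount (leave G 𝒜)) → Set (Sym2 V), IsRainbowHDecomp G H χ P := by
  have hcard : Nat.card (𝒜 ⊕ (leave G 𝒜).edgeSet) = #𝒜 + eCount (leave G 𝒜) := by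
    rw [Nat.card_sum, Nat.card_coe_set_eq, Nat.card_eq_fintype_card, Fintype.card_coe, eCount]
  rw [← hcard]
  refine exists_isRainbowHDecomp_of_indexed
    (Sum.elim (fun P ↦ (P.1 : Set (Sym2 V))) fun e ↦ {e.1}) ?_ (fun e he ↦ ?_) ?_
  · rintro (P | e)
    · exact h.subset_edgeSet P.2
    · exact Set.singleton_subset_iff.2 (SimpleGraph.edgeSet_mono leave_le e.2)
  · by_cases hc : ∃ P ∈ 𝒜, e ∈ P
    · obtain ⟨P, hP, heP⟩ := hc
      refine ⟨Sum.inl ⟨P, hP⟩, heP, ?_⟩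
      rintro (P' | ⟨e', he'⟩) heP'
      · exact congrArg Sum.inl (Subtype.ext (h.pairwiseDisjoint.elim_finset P'.2 hP e heP' heP))
      · obtain rfl : e = e' := heP'
        exact absurd heP ((mem_edgeSet_leave.1 he').2 P hP)
    · push Not at hc
      refine ⟨Sum.inr ⟨e, mem_edgeSet_leave.2 ⟨he, hc⟩⟩, rfl, ?_⟩
      rintro (P' | ⟨e', he'⟩) heP'
      · exact absurd heP' (hc P' P'.2)
      · exact congrArg Sum.inr (Subtype.ext (Eq.symm heP'))
  · rintro (P | e)
    · obtain ⟨f, -, hf, hfP⟩ := h.exists_embedding P P.2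
      refine Or.inr ⟨⟨f, hf.injective, hf.map_adj, hfP⟩, ?_⟩
      rw [Sum.elim_inl, hfP]
      exact hf.injOn
    · exact Or.inl ⟨e.1, rfl⟩

theorem IsRainbowPacking.phiR_le [Finite V] (h : IsRainbowPacking H G χ F 𝒜) :
    phiR G H χ ≤ #𝒜 + eCount (leave G 𝒜) :=
  Nat.sInf_le h.exists_isRainbowHDecomp

theorem phiR_le_eCount [Finite V] (G : SimpleGraph V) (H : SimpleGraph W) (χ : Sym2 V → ℕ) :
    phiR G H χ ≤ eCount G := by
  simpa [leave_empty] using (isRainbowPacking_empty H G χ Set.univ).phiR_le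

theorem exists_isRainbowHDecomp_phiR [Finite V] (G : SimpleGraph V) (H : SimpleGraph W)
    (χ : Sym2 V → ℕ) : ∃ P : Fin (phiR G H χ) → Set (Sym2 V), IsRainbowHDecomp G H χ P :=
  Nat.sInf_mem (s := {t | ∃ P : Fin t → Set (Sym2 V), IsRainbowHDecomp G H χ P})
    ⟨_, (isRainbowPacking_empty H G χ Set.univ).exists_isRainbowHDecomp⟩

theorem eCount_le_phiR [Finite V] (χ : Sym2 V → ℕ) (hG : ¬ ContainsCopy H G) :
    eCount G ≤ phiR G H χ := by
  obtain ⟨P, ⟨-, huniq⟩, hP⟩ := exists_isRainbowHDecomp_phiR G H χ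
  have hsingle (i) : ∃ e, P i = {e} :=
    (hP i).resolve_right fun ⟨⟨f, hf, hadj, _⟩, _⟩ ↦ hG ⟨f, hf, hadj⟩
  choose e he using hsingle
  have hcov : G.edgeSet ⊆ Set.range e := fun x hx ↦ by
    obtain ⟨i, hi, -⟩ := huniq x hx
    rw [he i] at hi
    exact ⟨i, Eq.symm hi⟩
  calc eCount G ≤ (Set.range e).ncard := Set.ncard_le_ncard hcov
    _ ≤ (Set.univ : Set (Fin (phiR G H χ))).ncard := Set.image_univ ▸ Set.ncard_image_le
    _ = phiR G H χ := by rw [Set.ncard_univ, Nat.card_fin]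

theorem eCount_le_card [Finite V] (G : SimpleGraph V) : eCount G ≤ Nat.card (Sym2 V) :=
  Set.ncard_le_card _

theorem bddAbove_phiR (n : ℕ) (H : SimpleGraph W) :
    BddAbove {t | ∃ G : SimpleGraph (Fin n), ∃ χ : Sym2 (Fin n) → ℕ,
      ProperEdgeColoring G χ ∧ phiR G H χ = t} := by
  refine ⟨Nat.card (Sym2 (Fin n)), ?_⟩
  rintro _ ⟨G, χ, -, rfl⟩
  exact (phiR_le_eCount G H χ).trans (eCount_le_card G)

theorem phiR_le_phiRmax (H : SimpleGraph W) {G : SimpleGraph (Fin n)} {χ : Sym2 (Fin n) → ℕ}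
    (hχ : ProperEdgeColoring G χ) : phiR G H χ ≤ phiRmax n H :=
  le_csSup (bddAbove_phiR n H) ⟨G, χ, hχ, rfl⟩

theorem exists_phiR_eq_phiRmax (n : ℕ) (H : SimpleGraph W) :
    ∃ G : SimpleGraph (Fin n), ∃ χ : Sym2 (Fin n) → ℕ,
      ProperEdgeColoring G χ ∧ phiR G H χ = phiRmax n H :=
  Nat.sSup_mem (s := {t | ∃ G : SimpleGraph (Fin n), ∃ χ : Sym2 (Fin n) → ℕ,
      ProperEdgeColoring G χ ∧ phiR G H χ = t})
    ⟨_, ⊥, fun _ ↦ 0, fun _ _ he ↦ by simp at he, rfl⟩ (bddAbove_phiR n H)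

theorem bddAbove_eCount (n : ℕ) (H : SimpleGraph W) :
    BddAbove {m | ∃ G : SimpleGraph (Fin n), ¬ ContainsCopy H G ∧ eCount G = m} := by
  refine ⟨Nat.card (Sym2 (Fin n)), ?_⟩
  rintro _ ⟨G, -, rfl⟩
  exact eCount_le_card G

theorem eCount_le_exNum {G : SimpleGraph (Fin n)} (hG : ¬ ContainsCopy H G) :
    eCount G ≤ exNum n H :=
  le_csSup (bddAbove_eCount n H) ⟨G, hG, rfl⟩

theorem not_containsCopy_bot (hH : H ≠ ⊥) : ¬ ContainsCopy H (⊥ : SimpleGraph V) := by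
  rintro ⟨f, -, hf⟩
  exact hH (eq_bot_iff.2 fun a b hab ↦ hf hab)

theorem exists_eCount_eq_exNum (n : ℕ) (hH : H ≠ ⊥) :
    ∃ G : SimpleGraph (Fin n), ¬ ContainsCopy H G ∧ eCount G = exNum n H :=
  Nat.sSup_mem (s := {m | ∃ G : SimpleGraph (Fin n), ¬ ContainsCopy H G ∧ eCount G = m})
    ⟨_, ⊥, not_containsCopy_bot hH, rfl⟩ (bddAbove_eCount n H)

theorem exNum_le_phiRmax (n : ℕ) (hH : H ≠ ⊥) : exNum n H ≤ phiRmax n H := by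
  obtain ⟨G, hG, hGe⟩ := exists_eCount_eq_exNum n hH
  obtain ⟨χ, hχ⟩ := Countable.exists_injective_nat (Sym2 (Fin n))
  rw [← hGe]
  exact (eCount_le_phiR χ hG).trans (phiR_le_phiRmax H fun e f _ _ hne _ ↦ hχ.ne hne)

end Decompositions

section RainbowEmbeddings

open Finset

variable {G : SimpleGraph V} {χ : Sym2 V → ℕ} {f : W → V} {z : V}

-- Each pair of a vertex `u ∈ U` and a colour in `K` rules out at most one `z`.
theorem exists_mem_forall_color_notMem (hχ : ProperEdgeColoring G χ) {X U : Finset V}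
    {K : Finset ℕ} (hX : #U + #U * #K < #X) :
    ∃ z ∈ X, z ∉ U ∧ ∀ u ∈ U, G.Adj z u → χ s(z, u) ∉ K := by
  classical
  let bad (p : V × ℕ) : Finset V := {z ∈ X | G.Adj z p.1 ∧ χ s(z, p.1) = p.2}
  have hbad (p : V × ℕ) : #(bad p) ≤ 1 := card_le_one.2 fun z hz z' hz' ↦ by
    obtain ⟨-, hadj, hcol⟩ := mem_filter.1 hz
    obtain ⟨-, hadj', hcol'⟩ := mem_filter.1 hz'
    by_contra hne
    exact hχ hadj hadj' (mt Sym2.congr_left.1 hne)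
      ⟨p.1, Sym2.mem_mk_right .., Sym2.mem_mk_right ..⟩ (hcol.trans hcol'.symm)
  have hcard : #(U ∪ (U ×ˢ K).biUnion bad) < #X := by
    refine lt_of_le_of_lt ((card_union_le _ _).trans (Nat.add_le_add_left ?_ _)) hX
    simpa only [mul_one, card_product] using
      card_biUnion_le_card_mul (U ×ˢ K) bad 1 fun p _ ↦ hbad p
  obtain ⟨z, hzX, hz⟩ := exists_mem_notMem_of_card_lt_card hcard
  rw [mem_union, not_or] at hz
  refine ⟨z, hzX, hz.1, fun u hu hadj hK ↦ hz.2 (mem_biUnion.2 ?_)⟩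
  exact ⟨(u, χ s(z, u)), mem_product.2 ⟨hu, hK⟩, mem_filter.2 ⟨hzX, hadj, rfl⟩⟩

theorem IsRainbowEmbedding.option_elim {H : SimpleGraph (Option W)}
    (h : IsRainbowEmbedding (H.comap some) G χ f) (hχ : ProperEdgeColoring G χ)
    (hz : z ∉ Set.range f) (hadj : ∀ u, H.Adj none (some u) → G.Adj z (f u))
    (hcol : ∀ u a b, H.Adj none (some u) → χ s(z, f u) ≠ χ s(f a, f b)) :
    IsRainbowEmbedding H G χ fun o ↦ o.elim z f := by
  have hedge (e : Sym2 (Option W)) (he : e ∈ H.edgeSet) :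
      (∃ e' ∈ (H.comap some).edgeSet, Sym2.map (fun o ↦ o.elim z f) e = Sym2.map f e') ∨
        ∃ u, H.Adj none (some u) ∧ Sym2.map (fun o ↦ o.elim z f) e = s(z, f u) := by
    induction e with
    | _ a b =>
      rcases a with _ | a <;> rcases b with _ | b
      · exact absurd he (H.loopless.irrefl _)
      · exact Or.inr ⟨b, he, rfl⟩
      · exact Or.inr ⟨a, H.adj_symm he, Sym2.eq_swap⟩
      · exact Or.inl ⟨s(a, b), he, rfl⟩
  have hmix (u : W) (hu : H.Adj none (some u)) (e : Sym2 W) : χ s(z, f u) ≠ χ (Sym2.map f e) := by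
    induction e with
    | _ a b => exact hcol u a b hu
  refine ⟨Option.injective_iff.2 ⟨h.injective, hz⟩, ?_, ?_⟩
  · rintro (_ | a) (_ | b) hab
    · exact absurd hab (H.loopless.irrefl _)
    · exact hadj b hab
    · exact (hadj a hab.symm).symm
    · exact h.map_adj hab
  · rintro _ ⟨e₁, he₁, rfl⟩ _ ⟨e₂, he₂, rfl⟩ heq
    rcases hedge e₁ he₁ with ⟨e₁', he₁', h₁⟩ | ⟨u₁, hu₁, h₁⟩ <;>
      rcases hedge e₂ he₂ with ⟨e₂', he₂', h₂⟩ | ⟨u₂, hu₂, h₂⟩ <;> rw [h₁, h₂] at heq ⊢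
    · exact h.injOn (Set.mem_image_of_mem _ he₁') (Set.mem_image_of_mem _ he₂') heq
    · exact absurd heq.symm (hmix u₂ hu₂ e₁')
    · exact absurd heq (hmix u₁ hu₁ e₂')
    · by_contra hne
      exact hχ (hadj u₁ hu₁) (hadj u₂ hu₂) hne ⟨z, Sym2.mem_mk_left .., Sym2.mem_mk_left ..⟩ heq

theorem IsRainbowEmbedding.comp_iso {W' : Type*} {H : SimpleGraph W} {H' : SimpleGraph W'}
    (h : IsRainbowEmbedding H G χ f) (φ : H' ≃g H) : IsRainbowEmbedding H' G χ (f ∘ φ) := by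
  refine ⟨h.injective.comp φ.injective, fun a b hab ↦ h.map_adj (φ.map_adj_iff.2 hab),
    h.injOn.mono ?_⟩
  rintro _ ⟨e, he, rfl⟩
  refine ⟨Sym2.map φ e, ?_, by rw [Sym2.map_map]⟩
  induction e with
  | _ a b => exact φ.map_adj_iff.2 he

theorem exists_isRainbowEmbedding_of_forall_adj [Finite W] {ι : Type*} {H : SimpleGraph W}
    (c : H.Coloring ι) (hχ : ProperEdgeColoring G χ) {X : ι → Finset V}
    (hX : ∀ i, Nat.card W + Nat.card W ^ 3 < #(X i))
    (hG : ∀ i j, i ≠ j → ∀ x ∈ X i, ∀ y ∈ X j, G.Adj x y) :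
    ∃ f, IsRainbowEmbedding H G χ f ∧ ∀ w, f w ∈ X (c w) := by
  classical
  induction W using Finite.induction_empty_option with
  | of_equiv φ ih =>
    rw [← Nat.card_congr φ] at hX
    let ψ : H.comap φ ≃g H := SimpleGraph.Iso.comap φ H
    obtain ⟨f, hf, hfX⟩ := ih (c.comp ψ.toHom) hX
    exact ⟨f ∘ ψ.symm, hf.comp_iso ψ.symm, fun w ↦ by simpa [ψ] using hfX (ψ.symm w)⟩
  | h_empty =>
    refine ⟨PEmpty.elim, ⟨fun a ↦ a.elim, fun a ↦ a.elim, ?_⟩, fun a ↦ a.elim⟩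
    rintro _ ⟨e, -, rfl⟩
    exact e.out.1.elim
  | @h_option W _ ih =>
    have hcard : Nat.card W ≤ Nat.card (Option W) := by
      rw [Finite.card_option]
      exact Nat.le_succ _
    let S : H.comap some →g H := ⟨some, id⟩
    obtain ⟨f, hf, hfX⟩ := ih (c.comp S) fun i ↦ lt_of_le_of_lt (by gcongr) (hX i)
    let U : Finset V := univ.image f
    let K : Finset ℕ := univ.image fun p : W × W ↦ χ s(f p.1, f p.2)
    have hU : #U ≤ Nat.card (Option W) :=
      card_image_le.trans (by rwa [card_univ, ← Nat.card_eq_fintype_card])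
    have hK : #K ≤ Nat.card (Option W) ^ 2 := by
      refine card_image_le.trans ?_
      rw [card_univ, ← Nat.card_eq_fintype_card, Nat.card_prod, ← sq]
      gcongr
    obtain ⟨z, hzX, hzU, hzK⟩ := exists_mem_forall_color_notMem hχ (X := X (c none)) (U := U)
      (K := K) (lt_of_le_of_lt (by rw [pow_succ']; gcongr) (hX _))
    have hadj (u : W) (hu : H.Adj none (some u)) : G.Adj z (f u) :=
      hG _ _ (c.valid hu) z hzX _ (hfX u)
    refine ⟨fun o ↦ o.elim z f, hf.option_elim hχ (by simpa [U] using hzU) hadj ?_, ?_⟩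
    · exact fun u a b hu heq ↦ hzK (f u) (mem_image_of_mem f (mem_univ u)) (hadj u hu)
        (mem_image.2 ⟨(a, b), mem_univ _, heq.symm⟩)
    · rintro (_ | w)
      exacts [hzX, hfX w]

theorem adj_of_piFinset_subset_transversalCliques {ι : Type*} [Fintype ι] [DecidableEq ι]
    {X Y : ι → Finset V} (h : Fintype.piFinset X ⊆ transversalCliques G Y)
    (hX : ∀ i, (X i).Nonempty) {i j : ι} (hij : i ≠ j) {x y : V} (hx : x ∈ X i) (hy : y ∈ X j) :
    G.Adj x y := by
  choose g hg using hX
  have ht : Function.update (Function.update g i x) j y ∈ Fintype.piFinset X := by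
    rw [Fintype.mem_piFinset]
    intro l
    simp only [Function.update_apply]
    split_ifs with hj hi
    exacts [hj ▸ hy, hi ▸ hx, hg l]
  simpa [Function.update_of_ne hij] using (mem_transversalCliques.1 (h ht)).2 hij

theorem exists_isRainbowEmbedding_of_le_card_transversalCliques [Finite W] {H : SimpleGraph W}
    {r : ℕ} (c : H.Coloring (Fin r)) {ε : ℝ} (hε : 0 < ε) : ∃ L : ℕ,
    ∀ {V : Type u} {G : SimpleGraph V} {χ : Sym2 V → ℕ} (Y : Fin r → Finset V),
      ProperEdgeColoring G χ → (∀ i, L ≤ #(Y i)) →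
      ε * ∏ i, (#(Y i) : ℝ) ≤ #(transversalCliques G Y) →
      ∃ f, IsRainbowEmbedding H G χ f ∧ ∀ w, f w ∈ Y (c w) := by
  obtain ⟨L, hL⟩ := exists_piFinset_subset.{u} r (Nat.card W + Nat.card W ^ 3 + 1) hε
  refine ⟨L, fun Y hχ hY hcard ↦ ?_⟩
  obtain ⟨X, hX, hXY⟩ := hL Y _ hY transversalCliques_subset hcard
  have hXne (i) : (X i).Nonempty := card_pos.1 ((hX i).2 ▸ Nat.succ_pos _)
  obtain ⟨f, hf, hfX⟩ := exists_isRainbowEmbedding_of_forall_adj c hχ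
    (fun i ↦ (hX i).2 ▸ Nat.lt_succ_self _)
    fun i j hij x hx y hy ↦ adj_of_piFinset_subset_transversalCliques hXY hXne hij hx hy
  exact ⟨f, hf, fun w ↦ (hX _).1 (hfX w)⟩

end RainbowEmbeddings

section PackingCounts

open Finset

variable {k : ℕ} {H : SimpleGraph W} {G G' : SimpleGraph V} {χ : Sym2 V → ℕ} {f : W → V}
  {A R S : Finset V} {𝒜 : Finset (Finset (Sym2 V))}

theorem exists_adj_of_card_le_chromaticNumber {α : Type*} [Fintype α]
    (h : Fintype.card α ≤ H.chromaticNumber) (c : H.Coloring α) {i j : α} (hij : i ≠ j) :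
    ∃ u v, H.Adj u v ∧ c u = i ∧ c v = j := by
  classical
  by_contra! hno
  let recolor : H.Coloring α := SimpleGraph.Coloring.mk (fun w ↦ if c w = j then i else c w)
    fun {a b} hab ↦ by
      have hv := c.valid hab
      have hno₁ := hno a b hab
      have hno₂ := hno b a hab.symm
      grind
  obtain ⟨w, hw⟩ := SimpleGraph.card_le_chromaticNumber_iff_forall_surjective.1 h recolor j
  change (if c w = j then i else c w) = j at hw
  grind

theorem sum_card_neighborsIn [DecidableRel G.Adj] (A R : Finset V) :
    ∑ v ∈ A, #(neighborsIn G R v) = #{p ∈ A ×ˢ R | G.Adj p.1 p.2} := by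
  classical
  simp only [neighborsIn, card_filter, sum_product]
  congr!

theorem sum_card_neighborsIn_le_two_mul_card {E : Finset (Sym2 V)} (hE : G.edgeSet ⊆ E)
    (A R : Finset V) : ∑ v ∈ A, #(neighborsIn G R v) ≤ 2 * #E := by
  classical
  rw [sum_card_neighborsIn]
  refine card_le_mul_card_image_of_maps_to (f := fun p ↦ s(p.1, p.2)) ?_ 2 fun e _ ↦ ?_
  · exact fun p hp ↦ hE (mem_filter.1 hp).2
  · induction e with
    | _ a b =>
      refine (card_le_card (t := {(a, b), (b, a)}) fun p hp ↦ ?_).trans card_le_two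
      have hab := (mem_filter.1 hp).2
      rcases Sym2.eq_iff.1 hab with ⟨h₁, h₂⟩ | ⟨h₁, h₂⟩ <;> simp [Prod.ext_iff, h₁, h₂]

theorem IsRainbowEmbedding.le_card_filter_mem_image {c : H.Coloring (Fin (k + 1))}
    [DecidableEq V] (h : IsRainbowEmbedding H G χ f) {P : Finset (Sym2 V)}
    (hf : ∀ w, f w ∈ (Fin.cons A fun _ ↦ R : Fin (k + 1) → Finset V) (c w))
    (hP : (P : Set (Sym2 V)) = Sym2.map f '' H.edgeSet)
    (hc : ∀ j : Fin k, ∃ u v, H.Adj u v ∧ c u = 0 ∧ c v = j.succ) :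
    k ≤ #{p ∈ A ×ˢ R | s(p.1, p.2) ∈ P} := by
  choose u v huv hu hv using hc
  have hinj : Function.Injective fun j ↦ (f (u j), f (v j)) := fun j j' hj ↦ by
    have hvv := h.injective (Prod.ext_iff.1 hj).2
    exact Fin.succ_injective _ (by rw [← hv j, ← hv j', hvv])
  have hmaps (j : Fin k) : (f (u j), f (v j)) ∈ {p ∈ A ×ˢ R | s(p.1, p.2) ∈ P} := by
    refine mem_filter.2 ⟨mem_product.2 ⟨?_, ?_⟩, ?_⟩
    · simpa [hu] using hf (u j)
    · simpa [hv] using hf (v j)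
    · exact mem_coe.1 (hP ▸ ⟨s(u j, v j), huv j, rfl⟩)
  simpa only [card_univ, Fintype.card_fin] using
    card_le_card_of_injOn (s := univ) _ (fun j _ ↦ hmaps j) hinj.injOn

namespace IsRainbowPacking

theorem mul_card_le_sum_card_neighborsIn {c : H.Coloring (Fin (k + 1))}
    (h : IsRainbowPacking H G χ
      {f | ∀ w, f w ∈ (Fin.cons A fun _ ↦ R : Fin (k + 1) → Finset V) (c w)} 𝒜)
    (hc : ∀ j : Fin k, ∃ u v, H.Adj u v ∧ c u = 0 ∧ c v = j.succ) :
    k * #𝒜 ≤ ∑ v ∈ A, #(neighborsIn (G \ leave G 𝒜) R v) := by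
  classical
  have hcopy : ∀ P ∈ 𝒜, k ≤ #{p ∈ A ×ˢ R | s(p.1, p.2) ∈ P} := fun P hP ↦ by
    obtain ⟨f, hfY, hf, hPf⟩ := h.exists_embedding P hP
    exact hf.le_card_filter_mem_image hfY hPf hc
  calc k * #𝒜 = ∑ _P ∈ 𝒜, k := by rw [sum_const, smul_eq_mul, mul_comm]
    _ ≤ ∑ P ∈ 𝒜, #{p ∈ A ×ˢ R | s(p.1, p.2) ∈ P} := sum_le_sum hcopy
    _ = #(𝒜.biUnion fun P ↦ {p ∈ A ×ˢ R | s(p.1, p.2) ∈ P}) := by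
      refine (card_biUnion fun P hP Q hQ hPQ ↦ disjoint_left.2 fun p hp hq ↦ ?_).symm
      exact disjoint_left.1 (h.pairwiseDisjoint hP hQ hPQ) (mem_filter.1 hp).2 (mem_filter.1 hq).2
    _ ≤ #{p ∈ A ×ˢ R | (G \ leave G 𝒜).Adj p.1 p.2} := by
      refine card_le_card (biUnion_subset.2 fun P hP p hp ↦ ?_)
      obtain ⟨hpAR, hpP⟩ := mem_filter.1 hp
      exact mem_filter.2 ⟨hpAR, sdiff_leave_adj.2 ⟨h.subset_edgeSet hP hpP, P, hP, hpP⟩⟩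
    _ = _ := (sum_card_neighborsIn A R).symm

theorem sum_card_neighborsIn_sdiff_leave_le [Finite W] {F : Set (W → V)}
    (h : IsRainbowPacking H G χ F 𝒜) (R S : Finset V) :
    ∑ x ∈ R, #(neighborsIn (G \ leave G 𝒜) S x) ≤ 2 * (#𝒜 * H.edgeSet.ncard) := by
  classical
  have hcover : (G \ leave G 𝒜).edgeSet ⊆ 𝒜.biUnion id := fun e he ↦ by
    induction e with
    | _ a b =>
      obtain ⟨-, P, hP, heP⟩ := sdiff_leave_adj.1 he
      exact mem_coe.2 (mem_biUnion.2 ⟨P, hP, heP⟩)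
  refine (sum_card_neighborsIn_le_two_mul_card hcover R S).trans (Nat.mul_le_mul_left 2 ?_)
  refine card_biUnion_le_card_mul _ _ _ fun P hP ↦ ?_
  obtain ⟨f, -, -, hPf⟩ := h.exists_embedding P hP
  rw [id, ← Set.ncard_coe_finset, hPf]
  exact Set.ncard_image_le

end IsRainbowPacking

end PackingCounts

section LeastDegrees

open Finset

variable {k : ℕ} {G G' : SimpleGraph V} {A N R S : Finset V} {v : V}

theorem exists_subset_card_eq_forall_le {ι β : Type*} [DecidableEq ι] [LinearOrder β] (d : ι → β)
    {S : Finset ι} {L : ℕ} (hL : L ≤ #S) :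
    ∃ A ⊆ S, #A = L ∧ ∀ a ∈ A, ∀ x ∈ S \ A, d a ≤ d x := by
  induction L with
  | zero => exact ⟨∅, by simp⟩
  | succ L ih =>
    obtain ⟨A, hAS, hA, hd⟩ := ih (by omega)
    have hne : (S \ A).Nonempty := by
      rw [← card_pos, card_sdiff_of_subset hAS]
      omega
    obtain ⟨z, hz, hzmin⟩ := exists_min_image _ d hne
    obtain ⟨hzS, hzA⟩ := mem_sdiff.1 hz
    refine ⟨insert z A, insert_subset hzS hAS, by rw [card_insert_of_notMem hzA, hA], ?_⟩
    intro a ha x hx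
    have hx' : x ∈ S \ A := sdiff_subset_sdiff subset_rfl (subset_insert z A) hx
    rcases mem_insert.1 ha with rfl | ha
    exacts [hzmin x hx', hd a ha x hx']

theorem card_filter_lt_mul_le_sum {ι : Type*} {s : Finset ι} {f : ι → ℝ}
    (hf : ∀ i ∈ s, 0 ≤ f i) (a : ℝ) : #{i ∈ s | a < f i} * a ≤ ∑ i ∈ s, f i := by
  rw [← nsmul_eq_mul]
  refine (card_nsmul_le_sum _ f a fun i hi ↦ (mem_filter.1 hi).2.le).trans ?_
  exact sum_le_sum_of_subset_of_nonneg (filter_subset _ _) fun i hi _ ↦ hf i hi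

theorem pow_le_card_transversalCliques_of_subset (hNS : N ⊆ S) {d q : ℝ} (hd : d ≤ #S)
    (hq : 0 ≤ q) (k : ℕ) (hdeg : ∀ x ∈ N, d ≤ #(neighborsIn G S x))
    (hN : (k - 1) * (#S - d) + q ≤ #N) : q ^ k ≤ #(transversalCliques G fun _ : Fin k ↦ N) := by
  refine pow_le_card_transversalCliques (sub_nonneg.2 hd) hq k (fun x hx ↦ ?_) hN
  have hx' := card_add_card_neighborsIn_le hNS G x
  rify at hx'
  linarith [hdeg x hx]

theorem pow_le_card_transversalCliques_neighborsIn (hG : G' ≤ G) (hRS : R ⊆ S) {t : ℝ}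
    (ht : 0 < t) (hdeg : ∀ x ∈ R, #(neighborsIn G S v) ≤ #(neighborsIn G S x))
    (hlost : (k + 1) * ∑ x ∈ R, (#(neighborsIn (G \ G') S x) : ℝ) ≤ t ^ 2)
    (hv : k * (#S - #(neighborsIn G S v)) + 3 * t ≤ (#(neighborsIn G' R v) : ℝ)) :
    t ^ (k + 1) ≤ #(transversalCliques G' fun _ : Fin (k + 1) ↦ neighborsIn G' R v) := by
  classical
  set lost : V → ℝ := fun x ↦ #(neighborsIn (G \ G') S x)
  set d := (#(neighborsIn G S v) : ℝ)
  set e : ℝ := t / (k + 1)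
  -- By the Markov inequality, at most `t` vertices of `R` lose more than `e` of their edges.
  set B : Finset V := {x ∈ R | e < lost x}
  set N : Finset V := neighborsIn G' R v \ B
  have he : (k + 1) * e = t := mul_div_cancel₀ t (by positivity)
  have he0 : 0 < e := by positivity
  have hB : (#B : ℝ) ≤ t := by
    have hmarkov := card_filter_lt_mul_le_sum (s := R) (f := lost) (fun _ _ ↦ Nat.cast_nonneg _) e
    refine le_of_mul_le_mul_right ?_ ht
    calc (#B : ℝ) * t = (k + 1) * (#B * e) := by rw [← he]; ring
      _ ≤ (k + 1) * ∑ x ∈ R, lost x := by gcongr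
      _ ≤ t * t := hlost.trans_eq (sq t)
  have hN : k * (#S - d) + 2 * t ≤ #N := by
    have hcard : (#(neighborsIn G' R v) : ℝ) ≤ #N + #B := by
      exact_mod_cast card_le_card_sdiff_add_card
    linarith
  have hNR : N ⊆ neighborsIn G' R v := sdiff_subset
  have hdegN : ∀ x ∈ N, d - e ≤ #(neighborsIn G' S x) := fun x hx ↦ by
    have hxR : x ∈ R := neighborsIn_subset (hNR hx)
    have hxlost : (#(neighborsIn (G \ G') S x) : ℝ) ≤ e := by
      by_contra! hlt
      exact (mem_sdiff.1 hx).2 (mem_filter.2 ⟨hxR, hlt⟩)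
    have hsplit := card_neighborsIn_add_card_neighborsIn_sdiff hG S x
    rify at hsplit
    have hdx : d ≤ #(neighborsIn G S x) := Nat.cast_le.2 (hdeg x hxR)
    linarith
  have hdS : d ≤ #S := Nat.cast_le.2 (card_le_card neighborsIn_subset)
  refine (pow_le_card_transversalCliques_of_subset (hNR.trans (neighborsIn_subset.trans hRS))
    (by linarith) ht.le (k + 1) hdegN ?_).trans
    (Nat.cast_le.2 (card_le_card (transversalCliques_mono fun _ ↦ hNR)))
  push_cast
  linarith

theorem card_filter_lt_mul_pow_le_card_transversalCliques (hG : G' ≤ G) (hRS : R ⊆ S) {t : ℝ}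
    (ht : 0 < t) (hdeg : ∀ a ∈ A, ∀ x ∈ R, #(neighborsIn G S a) ≤ #(neighborsIn G S x))
    (hlost : (k + 1) * ∑ x ∈ R, (#(neighborsIn (G \ G') S x) : ℝ) ≤ t ^ 2) :
    #{v ∈ A | k * (#S - #(neighborsIn G S v)) + 3 * t < (#(neighborsIn G' R v) : ℝ)} * t ^ (k + 1) ≤
      #(transversalCliques G' (Fin.cons A fun _ ↦ R : Fin (k + 2) → Finset V)) := by
  rw [card_transversalCliques_cons, Nat.cast_sum, ← nsmul_eq_mul]
  refine (card_nsmul_le_sum _ _ _ fun v hv ↦ ?_).trans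
    (sum_le_sum_of_subset_of_nonneg (filter_subset _ _) fun _ _ _ ↦ Nat.cast_nonneg _)
  obtain ⟨hvA, hv⟩ := mem_filter.1 hv
  exact pow_le_card_transversalCliques_neighborsIn hG hRS ht (hdeg v hvA) hlost hv.le

end LeastDegrees

section RemovalStep

open Finset

variable {k : ℕ} {H : SimpleGraph W} {G : SimpleGraph V} {χ : Sym2 V → ℕ} {A R S : Finset V}
  {𝒜 : Finset (Finset (Sym2 V))}

theorem IsRainbowPacking.mul_sum_card_neighborsIn_sdiff_leave_le [Finite W]
    {c : H.Coloring (Fin (k + 1))}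
    (h : IsRainbowPacking H G χ
      {f | ∀ w, f w ∈ (Fin.cons A fun _ ↦ R : Fin (k + 1) → Finset V) (c w)} 𝒜)
    (hc : ∀ j : Fin k, ∃ u v, H.Adj u v ∧ c u = 0 ∧ c v = j.succ) (T S : Finset V) :
    k * ∑ x ∈ T, #(neighborsIn (G \ leave G 𝒜) S x) ≤ 2 * H.edgeSet.ncard * (#A * #R) := by
  have hcard : k * #𝒜 ≤ #A * #R := (h.mul_card_le_sum_card_neighborsIn hc).trans
    (sum_le_card_nsmul A _ _ fun _ _ ↦ card_le_card neighborsIn_subset)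
  calc k * ∑ x ∈ T, #(neighborsIn (G \ leave G 𝒜) S x)
      ≤ k * (2 * (#𝒜 * H.edgeSet.ncard)) := by
        gcongr
        exact h.sum_card_neighborsIn_sdiff_leave_le T S
    _ = 2 * H.edgeSet.ncard * (k * #𝒜) := by ring
    _ ≤ _ := by gcongr

theorem sum_add_mul_le_of_few_exceptions {ι : Type*} {A : Finset ι} {d n : ι → ℝ} {k s x : ℝ}
    (hk : 1 ≤ k) (hx : 0 ≤ x) (hnd : ∀ i ∈ A, n i ≤ d i) (hds : ∀ i ∈ A, d i ≤ s) :
    ∑ i ∈ A, (d i + k * n i) ≤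
      #A * (k * s + x) + #{i ∈ A | k * (s - d i) + x < n i} * s := by
  have hpt : ∀ i ∈ A, d i + k * n i ≤
      (k * s + x) + if k * (s - d i) + x < n i then s else 0 := fun i hi ↦ by
    have hn := hnd i hi
    have hd := hds i hi
    split_ifs with h
    · nlinarith
    · nlinarith
  refine (sum_le_sum hpt).trans_eq ?_
  rw [sum_add_distrib, sum_const, nsmul_eq_mul, ← sum_filter, sum_const, nsmul_eq_mul]

theorem exists_forall_card_exceptional_le [Finite W] (c : H.Coloring (Fin (k + 2))) {η : ℝ}
    (hη : 0 < η) : ∃ L : ℕ, ∀ {V : Type u} {G G' : SimpleGraph V} {χ : Sym2 V → ℕ}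
      {A R S : Finset V}, ProperEdgeColoring G' χ → G' ≤ G → R ⊆ S → L ≤ #A → L ≤ #R →
      S.Nonempty → (∀ a ∈ A, ∀ x ∈ R, #(neighborsIn G S a) ≤ #(neighborsIn G S x)) →
      (k + 1) * ∑ x ∈ R, (#(neighborsIn (G \ G') S x) : ℝ) ≤ (η * #S) ^ 2 →
      (∀ f, (∀ w, f w ∈ (Fin.cons A fun _ ↦ R : Fin (k + 2) → Finset V) (c w)) →
        ¬ IsRainbowEmbedding H G' χ f) →
      #{v ∈ A | k * (#S - #(neighborsIn G S v)) + 3 * (η * #S) <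
        (#(neighborsIn G' R v) : ℝ)} ≤ η * #A := by
  obtain ⟨L, hL⟩ := exists_isRainbowEmbedding_of_le_card_transversalCliques.{u} c
    (pow_pos hη (k + 2))
  refine ⟨L, fun {V G G' χ A R S} hχ hG hRS hA hR hS hdeg hlost hno ↦ ?_⟩
  by_contra! hlt
  set B := {v ∈ A | k * (#S - #(neighborsIn G S v)) + 3 * (η * #S) <
    (#(neighborsIn G' R v) : ℝ)}
  have hcliques := card_filter_lt_mul_pow_le_card_transversalCliques (A := A) hG hRS
    (t := η * #S) (mul_pos hη (Nat.cast_pos.2 hS.card_pos)) hdeg hlost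
  have hdense : η ^ (k + 2) *
      ∏ i, (#((Fin.cons A fun _ ↦ R : Fin (k + 2) → Finset V) i) : ℝ) ≤
      #B * (η * #S) ^ (k + 1) := by
    rw [Fin.prod_univ_succ]
    simp only [Fin.cons_zero, Fin.cons_succ, prod_const, card_univ, Fintype.card_fin]
    calc η ^ (k + 2) * (#A * (#R : ℝ) ^ (k + 1)) = η * #A * (η * #R) ^ (k + 1) := by ring
      _ ≤ #B * (η * #S) ^ (k + 1) := by gcongr
  obtain ⟨f, hf, hfY⟩ := hL _ hχ (Fin.cases hA fun _ ↦ hR) (hdense.trans hcliques)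
  exact hno f hfY hf

theorem IsRainbowPacking.card_add_sum_card_neighborsIn_le {c : H.Coloring (Fin (k + 2))}
    (h : IsRainbowPacking H G χ
      {f | ∀ w, f w ∈ (Fin.cons A fun _ ↦ R : Fin (k + 2) → Finset V) (c w)} 𝒜)
    (hc : ∀ j : Fin (k + 1), ∃ u v, H.Adj u v ∧ c u = 0 ∧ c v = j.succ) (hk : 1 ≤ k)
    (hRS : R ⊆ S) {η : ℝ} (hη : 0 ≤ η)
    (hfew : #{v ∈ A | k * (#S - #(neighborsIn G S v)) + 3 * (η * #S) <
      (#(neighborsIn (leave G 𝒜) R v) : ℝ)} ≤ η * #A) :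
    #𝒜 + ∑ v ∈ A, (#(neighborsIn (leave G 𝒜) R v) : ℝ) ≤
      (k / (k + 1) + 4 * η) * (#A * #S) := by
  have hnl (v : V) : (#(neighborsIn (leave G 𝒜) R v) + #(neighborsIn (G \ leave G 𝒜) R v) : ℝ) ≤
      #(neighborsIn G S v) := by
    exact_mod_cast (card_neighborsIn_add_card_neighborsIn_sdiff leave_le R v).trans_le
      (card_le_card (neighborsIn_mono le_rfl hRS))
  have hcopies : (k + 1) * (#𝒜 : ℝ) ≤ ∑ v ∈ A, (#(neighborsIn (G \ leave G 𝒜) R v) : ℝ) := by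
    exact_mod_cast h.mul_card_le_sum_card_neighborsIn hc
  set n : V → ℝ := fun v ↦ #(neighborsIn (leave G 𝒜) R v)
  set l : V → ℝ := fun v ↦ #(neighborsIn (G \ leave G 𝒜) R v)
  set d : V → ℝ := fun v ↦ #(neighborsIn G S v)
  have hfew' := sum_add_mul_le_of_few_exceptions (A := A) (d := d) (n := n) (k := k) (s := #S)
    (x := 3 * (η * #S)) (by exact_mod_cast hk) (by positivity)
    (fun v _ ↦ by linarith [hnl v, (Nat.cast_nonneg _ : 0 ≤ l v)])
    fun v _ ↦ Nat.cast_le.2 (card_le_card neighborsIn_subset)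
  have hk0 : (0 : ℝ) < k + 1 := by positivity
  refine le_of_mul_le_mul_left ?_ hk0
  calc (k + 1) * (#𝒜 + ∑ v ∈ A, n v) ≤ ∑ v ∈ A, (l v + n v + k * n v) := by
        rw [sum_add_distrib, sum_add_distrib, ← mul_sum]
        linarith
    _ ≤ ∑ v ∈ A, (d v + k * n v) := sum_le_sum fun v _ ↦ by linarith [hnl v]
    _ ≤ #A * (k * #S + 3 * (η * #S)) + η * #A * #S := hfew'.trans (by gcongr)
    _ = (k + 4 * η) * (#A * #S) := by ring
    _ ≤ (k + 4 * η * (k + 1)) * (#A * #S) := by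
        refine mul_le_mul_of_nonneg_right ?_ (by positivity)
        nlinarith [mul_nonneg hη (Nat.cast_nonneg (α := ℝ) k)]
    _ = (k + 1) * ((k / (k + 1) + 4 * η) * (#A * #S)) := by field_simp

theorem exists_isRainbowPacking_of_least_degrees [Finite W] (hk : 1 ≤ k)
    (hH : H.chromaticNumber = (k + 2 : ℕ)) {η : ℝ} (hη : 0 < η) :
    ∃ L : ℕ, 0 < L ∧ ∃ N : ℕ, ∀ {V : Type u} [Finite V] [DecidableEq V] {G : SimpleGraph V}
      {χ : Sym2 V → ℕ} {A S : Finset V}, ProperEdgeColoring G χ → N ≤ #S → A ⊆ S → #A = L →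
      (∀ a ∈ A, ∀ x ∈ S \ A, #(neighborsIn G S a) ≤ #(neighborsIn G S x)) →
      ∃ 𝒜, IsRainbowPacking H G χ Set.univ 𝒜 ∧
        #𝒜 + ∑ v ∈ A, (#(neighborsIn (leave G 𝒜) (S \ A) v) : ℝ) ≤
          (k / (k + 1) + 4 * η) * (L * #S) := by
  obtain ⟨c⟩ : H.Colorable (k + 2) := SimpleGraph.chromaticNumber_le_iff_colorable.1 hH.le
  have hc (j : Fin (k + 1)) : ∃ u v, H.Adj u v ∧ c u = 0 ∧ c v = j.succ :=
    exists_adj_of_card_le_chromaticNumber (by rw [hH, Fintype.card_fin]) c (Fin.succ_ne_zero j).symm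
  have hbot : H ≠ ⊥ := by
    obtain ⟨u, v, huv, -⟩ := hc 0
    exact SimpleGraph.ne_bot_iff_exists_adj.2 ⟨u, v, huv⟩
  obtain ⟨L, hL⟩ := exists_forall_card_exceptional_le.{u} c hη
  set m := H.edgeSet.ncard
  refine ⟨L + 1, L.succ_pos, max (2 * (L + 1)) ⌈2 * m * (L + 1) / η ^ 2⌉₊,
    fun {V _ _ G χ A S} hχ hN hAS hA hdeg ↦ ?_⟩
  obtain ⟨𝒜, h𝒜, hmax⟩ := IsRainbowPacking.exists_maximal hbot G χ
    {f | ∀ w, f w ∈ (Fin.cons A fun _ ↦ S \ A : Fin (k + 2) → Finset V) (c w)}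
  refine ⟨𝒜, h𝒜.mono le_rfl (Set.subset_univ _), ?_⟩
  have hcard := card_sdiff_add_card_eq_card hAS
  have hlost : (k + 1) * ∑ x ∈ S \ A, (#(neighborsIn (G \ leave G 𝒜) S x) : ℝ) ≤
      (η * #S) ^ 2 := by
    have hNS : 2 * m * (L + 1) ≤ η ^ 2 * #S := by
      rw [← div_le_iff₀' (by positivity)]
      exact Nat.ceil_le.1 ((le_max_right _ _).trans hN)
    calc (k + 1) * ∑ x ∈ S \ A, (#(neighborsIn (G \ leave G 𝒜) S x) : ℝ)
        ≤ 2 * m * (#A * #(S \ A)) := by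
          exact_mod_cast h𝒜.mul_sum_card_neighborsIn_sdiff_leave_le hc (S \ A) S
      _ ≤ 2 * m * ((L + 1) * #S) := by
          rw [hA, Nat.cast_succ]
          gcongr
          exact sdiff_subset
      _ = 2 * m * (L + 1) * #S := by ring
      _ ≤ η ^ 2 * #S * #S := by gcongr
      _ = (η * #S) ^ 2 := by ring
  rw [← hA]
  refine h𝒜.card_add_sum_card_neighborsIn_le hc hk sdiff_subset hη.le ?_
  exact hL (hχ.mono leave_le) leave_le sdiff_subset (by omega) (by omega)
    (card_pos.1 (by omega)) hdeg hlost hmax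

end RemovalStep

section Recursion

open Finset

variable {k : ℕ} {H : SimpleGraph W} {G : SimpleGraph V} {χ : Sym2 V → ℕ} {A S : Finset V}
  {𝒜 ℬ : Finset (Finset (Sym2 V))}

theorem leave_deleteEdges (G : SimpleGraph V) (𝒜 : Finset (Finset (Sym2 V)))
    (E : Set (Sym2 V)) : leave (G.deleteEdges E) 𝒜 = (leave G 𝒜).deleteEdges E := by
  simp only [leave, SimpleGraph.deleteEdges_deleteEdges, Set.union_comm]

theorem eCount_le_eCount_deleteEdges_add [Finite V] (hS : G.support ⊆ S) (A : Finset V) :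
    eCount G ≤ eCount (G.deleteEdges {e | ∃ v ∈ A, v ∈ e}) + ∑ v ∈ A, #(neighborsIn G S v) := by
  classical
  set E := A.biUnion fun v ↦ (neighborsIn G S v).image fun x ↦ s(v, x)
  have hmemE {a b : V} (ha : a ∈ A) (hab : G.Adj a b) : s(a, b) ∈ E :=
    mem_biUnion.2 ⟨a, ha, mem_image_of_mem _
      (mem_neighborsIn.2 ⟨mem_coe.1 (hS hab.mem_support_right), hab⟩)⟩
  have hE : G.edgeSet ⊆ (G.deleteEdges {e | ∃ v ∈ A, v ∈ e}).edgeSet ∪ E := fun e he ↦ by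
    by_cases h : ∃ v ∈ A, v ∈ e
    · obtain ⟨a, ha, b, rfl⟩ := h
      exact Or.inr (hmemE ha he)
    · rw [SimpleGraph.edgeSet_deleteEdges]
      exact Or.inl ⟨he, h⟩
  refine (Set.ncard_le_ncard hE).trans ((Set.ncard_union_le _ _).trans ?_)
  rw [Set.ncard_coe_finset]
  exact add_le_add_right (card_biUnion_le.trans (sum_le_sum fun _ _ ↦ card_image_le)) _

theorem eCount_le_card_sq [Finite V] (hS : G.support ⊆ S) : eCount G ≤ #S ^ 2 := by
  have hbot : G.deleteEdges {e | ∃ v ∈ S, v ∈ e} = ⊥ := eq_bot_iff.2 fun a b hab ↦ by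
    rw [SimpleGraph.deleteEdges_adj] at hab
    exact hab.2 ⟨a, hS hab.1.mem_support_left, Sym2.mem_mk_left a b⟩
  calc eCount G ≤ 0 + ∑ v ∈ S, #(neighborsIn G S v) := by
        simpa [hbot, eCount] using eCount_le_eCount_deleteEdges_add hS S
    _ ≤ #S ^ 2 := by
        rw [zero_add, sq, ← smul_eq_mul]
        exact sum_le_card_nsmul _ _ _ fun v _ ↦ card_le_card neighborsIn_subset

theorem support_deleteEdges_subset_sdiff [DecidableEq V] (hS : G.support ⊆ S) (A : Finset V) :
    (G.deleteEdges {e | ∃ v ∈ A, v ∈ e}).support ⊆ (S \ A : Finset V) := by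
  intro a ha
  obtain ⟨b, hab⟩ := (SimpleGraph.mem_support _).1 ha
  rw [SimpleGraph.deleteEdges_adj] at hab
  exact mem_coe.2 (mem_sdiff.2 ⟨mem_coe.1 (hS hab.1.mem_support_left),
    fun haA ↦ hab.2 ⟨a, haA, Sym2.mem_mk_left a b⟩⟩)

theorem card_neighborsIn_le_sdiff_add [DecidableEq V] (hA : A ⊆ S) (G : SimpleGraph V) (v : V) :
    #(neighborsIn G S v) ≤ #(neighborsIn G (S \ A) v) + #A := by
  have h := card_add_card_neighborsIn_le (sdiff_subset (s := S) (t := A)) G v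
  have hcard := card_sdiff_add_card_eq_card hA
  omega

theorem eCount_leave_union_le [Finite V] [DecidableEq V] (hS : G.support ⊆ S) (hA : A ⊆ S)
    (𝒜 ℬ : Finset (Finset (Sym2 V))) : eCount (leave G (𝒜 ∪ ℬ)) ≤
      eCount (leave ((leave G 𝒜).deleteEdges {e | ∃ v ∈ A, v ∈ e}) ℬ) +
        (∑ v ∈ A, #(neighborsIn (leave G 𝒜) (S \ A) v) + #A ^ 2) := by
  rw [leave_deleteEdges, leave_union]
  refine (eCount_le_eCount_deleteEdges_add
    ((SimpleGraph.support_mono (leave_le.trans leave_le)).trans hS) A).trans ?_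
  gcongr
  calc ∑ v ∈ A, #(neighborsIn (leave (leave G 𝒜) ℬ) S v)
      ≤ ∑ v ∈ A, (#(neighborsIn (leave G 𝒜) (S \ A) v) + #A) := sum_le_sum fun v _ ↦
        (card_le_card (neighborsIn_mono leave_le subset_rfl)).trans
          (card_neighborsIn_le_sdiff_add hA _ v)
    _ = _ := by rw [sum_add_distrib, sum_const, smul_eq_mul, sq]

theorem quadratic_bound_of_sub {p α s L N : ℝ} (hp : p ≤ 1) (hα : 0 ≤ α) (hL : 0 ≤ L)
    (hLs : L ≤ s) (hLN : 2 * L ≤ N) :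
    (p + α) * (L * s) + L ^ 2 + (p * (s - L) ^ 2 / 2 + α * (s - L) ^ 2 + N * (s - L)) ≤
      p * s ^ 2 / 2 + α * s ^ 2 + N * s := by
  have hα' : 0 ≤ α * L * (s - L) := mul_nonneg (mul_nonneg hα hL) (sub_nonneg.2 hLs)
  have hp' : 0 ≤ (1 - p) * L ^ 2 := mul_nonneg (sub_nonneg.2 hp) (sq_nonneg L)
  have hN' : 0 ≤ (N - 2 * L) * L := mul_nonneg (sub_nonneg.2 hLN) hL
  nlinarith

theorem exists_isRainbowPacking_card_add_eCount_leave_le [Finite W] (hk : 1 ≤ k)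
    (hH : H.chromaticNumber = (k + 2 : ℕ)) {α : ℝ} (hα : 0 < α) :
    ∃ N : ℕ, ∀ {V : Type u} [Finite V] {χ : Sym2 V → ℕ} (S : Finset V) (G : SimpleGraph V),
      ProperEdgeColoring G χ → G.support ⊆ S →
      ∃ 𝒜, IsRainbowPacking H G χ Set.univ 𝒜 ∧ (#𝒜 + eCount (leave G 𝒜) : ℝ) ≤
        k / (k + 1) * #S ^ 2 / 2 + α * #S ^ 2 + N * #S := by
  classical
  obtain ⟨L, hL, N, hN⟩ := exists_isRainbowPacking_of_least_degrees.{u} hk hH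
    (div_pos hα four_pos)
  refine ⟨max N (2 * L), fun {V _ χ} S ↦ ?_⟩
  set M := max N (2 * L)
  induction S using Finset.strongInduction with
  | H S ih =>
  intro G hχ hS
  by_cases hSM : #S < M
  · refine ⟨∅, isRainbowPacking_empty H G χ _, ?_⟩
    have hG : (eCount G : ℝ) ≤ M * #S := by
      exact_mod_cast (eCount_le_card_sq hS).trans (by rw [sq]; gcongr)
    rw [leave_empty, card_empty, Nat.cast_zero, zero_add]
    exact hG.trans (le_add_of_nonneg_left (by positivity))
  have hLS : 2 * L ≤ #S := (le_max_right _ _).trans (not_lt.1 hSM)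
  obtain ⟨A, hAS, hA, hdeg⟩ := exists_subset_card_eq_forall_le (L := L)
    (fun v ↦ #(neighborsIn G S v)) (by omega : L ≤ #S)
  obtain ⟨𝒜, h𝒜, hcost⟩ := hN hχ ((le_max_left _ _).trans (not_lt.1 hSM)) hAS hA hdeg
  obtain ⟨ℬ, hℬ, hcostℬ⟩ := ih (S \ A) (sdiff_ssubset hAS (card_pos.1 (hA ▸ hL)))
    ((leave G 𝒜).deleteEdges {e | ∃ v ∈ A, v ∈ e})
    (hχ.mono ((SimpleGraph.deleteEdges_le _).trans leave_le))
    (support_deleteEdges_subset_sdiff ((SimpleGraph.support_mono leave_le).trans hS) A)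
  refine ⟨𝒜 ∪ ℬ, h𝒜.union (hℬ.mono (SimpleGraph.deleteEdges_le _) subset_rfl), ?_⟩
  have hleave := eCount_leave_union_le hS hAS 𝒜 ℬ
  have hunion := card_union_le 𝒜 ℬ
  have hcard := card_sdiff_add_card_eq_card hAS
  rw [hA] at hleave hcard
  rify at hleave hunion hcard
  rw [eq_sub_of_add_eq hcard] at hcostℬ
  rw [mul_div_cancel₀ _ four_ne_zero] at hcost
  have hquad := quadratic_bound_of_sub (p := k / (k + 1)) (s := #S) (L := L) (N := M)
    (div_le_one_of_le₀ (by linarith) (by positivity)) hα.le (by positivity)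
    (by exact_mod_cast (by omega : L ≤ #S)) (by exact_mod_cast le_max_right N (2 * L))
  linarith

theorem phiRmax_le [Finite W] (hk : 1 ≤ k) (hH : H.chromaticNumber = (k + 2 : ℕ)) {α : ℝ}
    (hα : 0 < α) : ∃ N : ℕ, ∀ n : ℕ,
      (phiRmax n H : ℝ) ≤ k / (k + 1) * n ^ 2 / 2 + α * n ^ 2 + N * n := by
  obtain ⟨N, hN⟩ := exists_isRainbowPacking_card_add_eCount_leave_le.{0} hk hH hα
  refine ⟨N, fun n ↦ ?_⟩
  obtain ⟨G, χ, hχ, hG⟩ := exists_phiR_eq_phiRmax n H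
  obtain ⟨𝒜, h𝒜, hcost⟩ := hN univ G hχ (by simp)
  have hphi : (phiR G H χ : ℝ) ≤ #𝒜 + eCount (leave G 𝒜) := by exact_mod_cast h𝒜.phiR_le
  rw [← hG]
  simpa using hphi.trans hcost

end Recursion

section Turan

open Finset

variable {H : SimpleGraph W}

theorem not_containsCopy_turanGraph {n r : ℕ} (hr : 0 < r) (hH : ¬ H.Colorable r) :
    ¬ ContainsCopy H (SimpleGraph.turanGraph n r) := by
  rintro ⟨f, -, hf⟩
  exact hH ⟨⟨fun w ↦ ⟨f w % r, Nat.mod_lt _ hr⟩, fun hab h ↦ hf hab (Fin.ext_iff.1 h)⟩⟩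

theorem le_eCount_turanGraph (n k : ℕ) :
    (k / (k + 1) : ℝ) * n ^ 2 / 2 - (k + 1) ^ 2 ≤ eCount (SimpleGraph.turanGraph n (k + 1)) := by
  set e := eCount (SimpleGraph.turanGraph n (k + 1)) with he
  rw [eCount, Set.ncard_eq_toFinset_card', ← SimpleGraph.edgeFinset,
    SimpleGraph.card_edgeFinset_turanGraph, Nat.add_sub_cancel] at he
  have hmod : n % (k + 1) ≤ k := Nat.le_of_lt_succ (Nat.mod_lt _ k.succ_pos)
  have hdiv : (n ^ 2 - (n % (k + 1)) ^ 2) * k ≤ 2 * (k + 1) * (e + 1) :=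
    (Nat.lt_mul_div_succ _ (by positivity)).le.trans (Nat.mul_le_mul_left _ (by omega))
  have hsq : n ^ 2 * k ≤ 2 * (k + 1) * (e + 1) + k ^ 2 * k := by
    have hle : n ^ 2 ≤ n ^ 2 - (n % (k + 1)) ^ 2 + k ^ 2 := by
      have := Nat.pow_le_pow_left hmod 2
      omega
    nlinarith
  rify at hsq
  rw [div_mul_eq_mul_div, div_div, sub_le_iff_le_add, div_le_iff₀ (by positivity)]
  have hk : (0 : ℝ) ≤ k := k.cast_nonneg
  nlinarith [pow_nonneg hk 2, pow_nonneg hk 3]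

theorem turan_le_exNum {k : ℕ} (hH : ¬ H.Colorable (k + 1)) (n : ℕ) :
    (k / (k + 1) : ℝ) * n ^ 2 / 2 - (k + 1) ^ 2 ≤ exNum n H :=
  (le_eCount_turanGraph n k).trans
    (Nat.cast_le.2 (eCount_le_exNum (not_containsCopy_turanGraph k.succ_pos hH)))

theorem exists_forall_mul_add_le_mul_sq (a b : ℝ) {δ : ℝ} (hδ : 0 < δ) :
    ∃ n₀ : ℕ, ∀ n : ℕ, n₀ ≤ n → a * n + b ≤ δ * (n : ℝ) ^ 2 := by
  refine ⟨max 1 ⌈(a + |b|) / δ⌉₊, fun n hn ↦ ?_⟩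
  have hn₁ : (1 : ℝ) ≤ n := by exact_mod_cast (le_max_left _ _).trans hn
  have hab : a + |b| ≤ δ * n := by
    rw [← div_le_iff₀' hδ]
    exact Nat.ceil_le.1 ((le_max_right _ _).trans hn)
  calc a * n + b ≤ a * n + |b| * n := by
        gcongr
        exact (le_abs_self b).trans (le_mul_of_one_le_right (abs_nonneg b) hn₁)
    _ = (a + |b|) * n := by ring
    _ ≤ δ * n * n := by gcongr
    _ = δ * (n : ℝ) ^ 2 := by ring

theorem exists_chromaticNumber_eq_add_two [Finite W] (hH : 3 ≤ H.chromaticNumber) :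
    ∃ k : ℕ, 1 ≤ k ∧ H.chromaticNumber = (k + 2 : ℕ) := by
  have := Fintype.ofFinite W
  obtain ⟨r, hr⟩ := ENat.ne_top_iff_exists.1
    (SimpleGraph.chromaticNumber_ne_top_iff_exists.2 ⟨_, H.colorable_of_fintype⟩)
  rw [← hr] at hH
  have hr₃ : 3 ≤ r := by exact_mod_cast hH
  exact ⟨r - 2, by omega, by rw [← hr, Nat.sub_add_cancel (by omega)]⟩

end Turan

theorem stmt16 {W : Type*} [Fintype W] (H : SimpleGraph W)
    (hχH : 3 ≤ H.chromaticNumber) (δ : ℝ) (hδ : 0 < δ) :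
    ∃ n₀ : ℕ, ∀ n : ℕ, n₀ ≤ n →
      exNum n H ≤ phiRmax n H ∧
      (phiRmax n H : ℝ) ≤ (exNum n H : ℝ) + δ * (n : ℝ) ^ 2 := by
  obtain ⟨k, hk, hH⟩ := exists_chromaticNumber_eq_add_two hχH
  have hcol : ¬ H.Colorable (k + 1) := fun h ↦ by
    have hle := SimpleGraph.chromaticNumber_le_iff_colorable.2 h
    rw [hH, Nat.cast_le] at hle
    omega
  have hbot : H ≠ ⊥ := by
    rintro rfl
    exact hcol ⟨⟨fun _ ↦ 0, fun h ↦ h.elim⟩⟩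
  obtain ⟨N, hN⟩ := phiRmax_le hk hH (half_pos hδ)
  obtain ⟨n₀, hn₀⟩ := exists_forall_mul_add_le_mul_sq N ((k + 1) ^ 2) (half_pos hδ)
  refine ⟨n₀, fun n hn ↦ ⟨exNum_le_phiRmax n hbot, ?_⟩⟩
  linarith [hN n, turan_le_exNum hcol n, hn₀ n hn]

end RainbowDecomp
end
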